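/- (Estimate 2, left extreme subdomain.) Let ε ∈ C^∞(cl(Ω_1 × (0,T))) satisfy: 𝒫_p ε = 0 in Ω_1 × (0,T); ε = 0 on (∂D × [a_1,b_1]) × [0,T]; ε(·,·,0) = 0 on Ω_1; and ε(·,a_1,·) = 0 on D × (0,T). Set ν = ∂_{x_n}ε. Let φ be a strictly positive C^2 function with φ'/φ and φ''/φ bounded such that 4p + 2 b_n(t)/a_{n,n}(t) + φ'(a_1)/φ(a_1) > 0 for all t ∈ [0,T], and let ϕ be a strictly positive C^1 function on [0,T] with ϕ'(t)/ϕ(t) ≤ −Γ for all t, where Γ = sup_t|a_{n,n}| · sup|φ''/φ| + 2 sup_t|a_{n,n}| · (sup|φ'/φ|)² + 2 sup_t|c − p b_n − p² a_{n,n}| + sup_t|2p a_{n,n}+b_n| · sup|φ'/φ|. Then for every (X, x_n, t) ∈ cl(D) × [a_1,b_1] × [0,T]: ν(X,x_n,t)² φ(x_n) ϕ(t) ≤ sup_{cl(D)×[0,T]} ν(·,b_1,·)² φ(b_1) ϕ(·). -/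

import Mathlib

open Set Filter

/-- Spatial partial derivative `∂u/∂xᵢ` of a function `u : ℝⁿ → ℝ`. -/
noncomputable def pd1 {m : ℕ} (i : Fin m) (u : (Fin m → ℝ) → ℝ) (x : Fin m → ℝ) : ℝ :=
  fderiv ℝ u x (Pi.single i 1)

/-- Second spatial partial derivative `∂²u/∂xᵢ∂xⱼ`. -/
noncomputable def pd2 {m : ℕ} (i j : Fin m) (u : (Fin m → ℝ) → ℝ) (x : Fin m → ℝ) : ℝ :=
  pd1 i (fun y => pd1 j u y) x

/-- The parabolic operator
`𝒫u = ∂ₜu − Σᵢⱼ aᵢⱼ(t) ∂ᵢ∂ⱼu + Σᵢ bᵢ(t) ∂ᵢu + c(t) u`. -/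
noncomputable def parabolicOp {m : ℕ} (a : Fin m → Fin m → ℝ → ℝ) (b : Fin m → ℝ → ℝ)
    (c : ℝ → ℝ) (u : (Fin m → ℝ) → ℝ → ℝ) (x : Fin m → ℝ) (t : ℝ) : ℝ :=
  deriv (fun s => u x s) t
    - ∑ i, ∑ j, a i j t * pd2 i j (fun y => u y t) x
    + ∑ i, b i t * pd1 i (fun y => u y t) x
    + c t * u x t

/-- The transformed operator `𝒫ₚε = ∂ₜε − Σᵢⱼ aᵢⱼ ∂ᵢ∂ⱼε
+ Σ_{i<n} (2p aᵢₙ + bᵢ) ∂ᵢε + (2p aₙₙ + bₙ) ∂ₙε + (c − p bₙ − p² aₙₙ) ε`,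
in dimension `n+1`, the last coordinate playing the role of `xₙ`. -/
noncomputable def transOp {n : ℕ} (p : ℝ) (a : Fin (n+1) → Fin (n+1) → ℝ → ℝ)
    (b : Fin (n+1) → ℝ → ℝ) (c : ℝ → ℝ)
    (ε : (Fin (n+1) → ℝ) → ℝ → ℝ) (x : Fin (n+1) → ℝ) (t : ℝ) : ℝ :=
  deriv (fun s => ε x s) t
    - ∑ i, ∑ j, a i j t * pd2 i j (fun y => ε y t) x
    + ∑ i ∈ Finset.univ.erase (Fin.last n),
        (2 * p * a i (Fin.last n) t + b i t) * pd1 i (fun y => ε y t) x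
    + (2 * p * a (Fin.last n) (Fin.last n) t + b (Fin.last n) t) *
        pd1 (Fin.last n) (fun y => ε y t) x
    + (c t - p * b (Fin.last n) t - p ^ 2 * a (Fin.last n) (Fin.last n) t) * ε x t

/-!
Since the coefficients depend on time only, `ν = ∂ₙε` solves the same equation as `ε`. Suppose
that `ν² φ ϕ` has a nonzero maximum over the past of some time. At an interior point, the first
and second order conditions there, inserted in the equation for `ν`, bound `ϕ' / ϕ` from below,
against the decay of `ϕ`; to have strict decay one first multiplies `ϕ` by `exp (-δ t)` and lets
`δ → 0` at the end. On the face `xₙ = a₁` the function `ε` vanishes, so the equation reduces there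
to a relation between `∂ₙν` and `ν`, and the one-sided first order condition contradicts the sign
condition. On the lateral boundary and at time `0` the normal derivative is zero. Only the face
`xₙ = b₁` is left.
-/

open scoped Matrix Topology

section PositiveSemidefinite

variable {ι : Type*} [Fintype ι]

theorem sum_mul_nonneg_of_posSemidef {A : ι → ι → ℝ} {S : Matrix ι ι ℝ}
    (hA : ∀ ξ : ι → ℝ, 0 ≤ ∑ i, ∑ j, A i j * ξ i * ξ j) (hS : S.PosSemidef) :
    0 ≤ ∑ i, ∑ j, A i j * S i j := by
  obtain ⟨m, v, rfl⟩ := Matrix.posSemidef_iff_eq_sum_vecMulVec.1 hS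
  calc 0 ≤ ∑ l, ∑ i, ∑ j, A i j * v l i * v l j := Finset.sum_nonneg fun l _ => hA (v l)
    _ = ∑ i, ∑ j, ∑ l, A i j * v l i * v l j :=
      Finset.sum_comm.trans (Finset.sum_congr rfl fun i _ => Finset.sum_comm)
    _ = _ := by
      simp only [Matrix.sum_apply, Matrix.vecMulVec_apply, star_trivial, Finset.mul_sum, mul_assoc]

theorem sum_mul_le_of_quadraticForm_le {A H : ι → ι → ℝ} {κ : ℝ} {k : ι}
    (hA : ∀ ξ : ι → ℝ, 0 ≤ ∑ i, ∑ j, A i j * ξ i * ξ j) (hH : ∀ i j, H i j = H j i)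
    (hle : ∀ ξ : ι → ℝ, ∑ i, ∑ j, H i j * ξ i * ξ j ≤ κ * ξ k ^ 2) :
    ∑ i, ∑ j, A i j * H i j ≤ κ * A k k := by
  classical
  have hS : (Matrix.single k k κ - Matrix.of H).PosSemidef := by
    refine .of_dotProduct_mulVec_nonneg ?_ fun ξ => ?_
    · ext i j
      simp [Matrix.single_apply, hH i j, and_comm]
    · have hform : star ξ ⬝ᵥ Matrix.of H *ᵥ ξ = ∑ i, ∑ j, H i j * ξ i * ξ j := by
        simp only [dotProduct, Matrix.mulVec, Finset.mul_sum, Matrix.of_apply, star_trivial]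
        exact Finset.sum_congr rfl fun i _ => Finset.sum_congr rfl fun j _ => by ring
      have hsingle : star ξ ⬝ᵥ Matrix.single k k κ *ᵥ ξ = κ * ξ k ^ 2 := by
        rw [Matrix.single_mulVec, ← Pi.single, dotProduct_single, Pi.star_apply, star_trivial]
        ring
      rw [Matrix.sub_mulVec, dotProduct_sub, hform, hsingle, sub_nonneg]
      exact hle ξ
  have hnonneg := sum_mul_nonneg_of_posSemidef hA hS
  have hsingle : ∑ i, ∑ j, A i j * Matrix.single k k κ i j = κ * A k k := by
    simp [Matrix.single_apply, ite_and, mul_comm]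
  simp only [Matrix.sub_apply, Matrix.of_apply, mul_sub, Finset.sum_sub_distrib] at hnonneg
  linarith

end PositiveSemidefinite

section Calculus

theorem second_deriv_nonpos_of_isLocalMax {g g' : ℝ → ℝ} {g'' x : ℝ}
    (hg : ∀ᶠ s in 𝓝 x, HasDerivAt g (g' s) s) (hg' : HasDerivAt g' g'' x)
    (hmax : IsLocalMax g x) : g'' ≤ 0 := by
  by_contra! hpos
  have hderiv : deriv g =ᶠ[𝓝 x] g' := hg.mono fun s hs => hs.deriv
  have hmin : IsLocalMin g x :=
    isLocalMin_of_deriv_deriv_pos (by rwa [hderiv.deriv_eq, hg'.deriv]) hmax.deriv_eq_zero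
      hg.self_of_nhds.continuousAt
  have hconst : g =ᶠ[𝓝 x] fun _ => g x := by
    filter_upwards [hmax, hmin] with s hle hge using le_antisymm hle hge
  have hzero : g' =ᶠ[𝓝 x] fun _ => 0 :=
    hderiv.symm.trans (hconst.deriv.trans (by simp))
  exact hpos.ne' (hg'.unique ((hasDerivAt_const x (0 : ℝ)).congr_of_eventuallyEq hzero))

theorem second_deriv_le_of_isLocalMax_sq_mul {f f' g g' : ℝ → ℝ} {f'' g'' x : ℝ}
    (hf : ∀ᶠ s in 𝓝 x, HasDerivAt f (f' s) s) (hf' : HasDerivAt f' f'' x)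
    (hg : ∀ᶠ s in 𝓝 x, HasDerivAt g (g' s) s) (hg' : HasDerivAt g' g'' x)
    (hgx : 0 < g x) (hmax : IsLocalMax (fun s => f s ^ 2 * g s) x) :
    2 * f x * f'' ≤ f x ^ 2 * (3 / 2 * (g' x / g x) ^ 2 - g'' / g x) := by
  have hderiv : ∀ᶠ s in 𝓝 x, HasDerivAt (fun s => f s ^ 2 * g s)
      (2 * f s * f' s * g s + f s ^ 2 * g' s) s := by
    filter_upwards [hf, hg] with s hfs hgs
    exact ((hfs.fun_pow 2).mul hgs).congr_deriv (by simp)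
  have hderiv' : HasDerivAt (fun s => 2 * f s * f' s * g s + f s ^ 2 * g' s)
      (2 * (f' x ^ 2 + f x * f'') * g x + 4 * f x * f' x * g' x + f x ^ 2 * g'') x := by
    have hfx := hf.self_of_nhds
    refine ((((hfx.const_mul 2).fun_mul hf').fun_mul hg.self_of_nhds).fun_add
      ((hfx.fun_pow 2).fun_mul hg')).congr_deriv ?_
    simp only [Nat.cast_ofNat, Nat.add_one_sub_one, pow_one]
    ring
  have hsecond := second_deriv_nonpos_of_isLocalMax hderiv hderiv' hmax
  have hfirst : f x * (2 * f' x * g x + f x * g' x) = 0 := by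
    linear_combination hmax.hasDerivAt_eq_zero hderiv.self_of_nhds
  rcases mul_eq_zero.1 hfirst with hfx | hcrit
  · simp [hfx]
  · obtain ⟨r, hr⟩ : ∃ r, g' x = r * g x := ⟨g' x / g x, by field_simp⟩
    obtain ⟨r₂, hr₂⟩ : ∃ r₂, g'' = r₂ * g x := ⟨g'' / g x, by field_simp⟩
    have hf'x : f' x = -(f x * r) / 2 := by
      refine mul_right_cancel₀ hgx.ne' ?_
      linear_combination hcrit / 2 - f x / 2 * hr
    rw [hr, hr₂, hf'x] at hsecond
    rw [hr, hr₂, mul_div_cancel_right₀ _ hgx.ne', mul_div_cancel_right₀ _ hgx.ne']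
    refine le_of_mul_le_mul_right ?_ hgx
    linarith

end Calculus

section Ray

variable {E : Type*} [AddCommGroup E] [Module ℝ E] [TopologicalSpace E] [ContinuousAdd E]
  [ContinuousSMul ℝ E]

theorem tendsto_add_smul_nhds_zero (q v : E) : Tendsto (fun s : ℝ => q + s • v) (𝓝 0) (𝓝 q) :=
  (show Continuous fun s : ℝ => q + s • v by fun_prop).tendsto' 0 q (by simp)

theorem eventually_add_smul_mem {U : Set E} {q : E} (hU : IsOpen U) (hq : q ∈ U) (v : E) :
    ∀ᶠ s in 𝓝[>] (0 : ℝ), q + s • v ∈ U :=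
  ((tendsto_add_smul_nhds_zero q v).eventually (hU.mem_nhds hq)).filter_mono nhdsWithin_le_nhds

end Ray

section Differentiation

variable {E F : Type*} [NormedAddCommGroup E] [NormedSpace ℝ E] [NormedAddCommGroup F]
  [NormedSpace ℝ F] {f : E → F} {S : Set E} {q v : E}

theorem eventually_hasDerivAt_add_smul (hf : ContDiffAt ℝ 1 f q) (v : E) :
    ∀ᶠ s in 𝓝 (0 : ℝ), HasDerivAt (fun s => f (q + s • v)) (fderiv ℝ f (q + s • v) v) s := by
  filter_upwards [(tendsto_add_smul_nhds_zero q v).eventually (hf.eventually (by simp))] with s hs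
  exact (hs.differentiableAt one_ne_zero).hasFDerivAt.comp_hasDerivAt s
    (by simpa using ((hasDerivAt_id s).smul_const v).const_add q)

theorem hasDerivAt_clm_add_smul {G : E → E →L[ℝ] F} {G' : E →L[ℝ] E →L[ℝ] F}
    (hG : HasFDerivAt G G' q) (v w : E) :
    HasDerivAt (fun s : ℝ => G (q + s • v) w) (G' v w) 0 := by
  simpa using (hG.hasLineDerivAt v).clm_apply (hasDerivAt_const (0 : ℝ) w)

theorem differentiableAt_fderiv (hf : ContDiffAt ℝ 2 f q) : DifferentiableAt ℝ (fderiv ℝ f) q :=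
  (hf.fderiv_right (m := 1) (by norm_num)).differentiableAt one_ne_zero

theorem fderiv_fderiv_apply (hf : ContDiffAt ℝ 2 f q) (v : E) :
    fderiv ℝ (fun x => fderiv ℝ f x v) q = fderiv ℝ (fderiv ℝ f) q v := by
  have hsymm : IsSymmSndFDerivAt ℝ f q :=
    hf.isSymmSndFDerivAt (by rw [minSmoothness_of_isRCLikeNormedField])
  ext w
  rw [fderiv_clm_apply (differentiableAt_fderiv hf) (differentiableAt_const v)]
  simpa using hsymm.eq w v

theorem fderiv_fderiv_fderiv_apply (hf : ContDiffAt ℝ 3 f q) (v : E) :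
    fderiv ℝ (fderiv ℝ (fun x => fderiv ℝ f x v)) q = fderiv ℝ (fderiv ℝ (fderiv ℝ f)) q v := by
  have hnear : fderiv ℝ (fun x => fderiv ℝ f x v) =ᶠ[𝓝 q] fun x => fderiv ℝ (fderiv ℝ f) x v := by
    filter_upwards [hf.eventually (by simp)] with x hx
    exact fderiv_fderiv_apply (hx.of_le (by norm_num)) v
  rw [hnear.fderiv_eq, fderiv_fderiv_apply (hf.fderiv_right (by norm_num))]

theorem fderivWithin_apply_of_mem_tangentConeAt {f' : E →L[ℝ] F} (hf : HasFDerivWithinAt f f' S q)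
    (hv : v ∈ tangentConeAt ℝ S q) : fderivWithin ℝ f S q v = f' v :=
  hf.differentiableWithinAt.hasFDerivWithinAt.unique_on hf hv

theorem apply_eq_zero_of_eqOn_zero {f' : E →L[ℝ] F} {Z : Set E} (hf : HasFDerivWithinAt f f' S q)
    (hZS : Z ⊆ S) (hzero : EqOn f 0 Z) (hq : q ∈ Z) (hv : v ∈ tangentConeAt ℝ Z q) : f' v = 0 :=
  (hf.mono hZS).unique_on ((hasFDerivWithinAt_const (0 : F) q Z).congr hzero (hzero hq)) hv

theorem continuousOn_fderivWithin_apply (hf : ContDiffOn ℝ 1 f S)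
    (hv : ∀ x ∈ S, v ∈ tangentConeAt ℝ S x) : ContinuousOn (fun x => fderivWithin ℝ f S x v) S := by
  intro x hx
  obtain ⟨W, hW, hWS, -, f', hf', hf'_cont⟩ :=
    (contDiffWithinAt_succ_iff_hasFDerivWithinAt' (n := 0) (by simp)).1 (by simpa using hf x hx)
  rw [insert_eq_of_mem hx] at hW hWS
  have heq : ∀ y ∈ W, fderivWithin ℝ f S y v = f' y v := fun y hy =>
    fderivWithin_apply_of_mem_tangentConeAt (hf' y hy) (hv y (hWS hy))
  exact (hf'_cont.continuousWithinAt.clm_apply continuousWithinAt_const).congr_of_eventuallyEq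
    (eventually_of_mem hW heq) (heq x (mem_of_mem_nhdsWithin hx hW))

theorem mem_posTangentConeAt_of_eventually (h : ∀ᶠ s in 𝓝[>] (0 : ℝ), q + s • v ∈ S) :
    v ∈ posTangentConeAt S q :=
  mem_posTangentConeAt_of_frequently_mem h.frequently

theorem mem_tangentConeAt_of_mem_posTangentConeAt (hv : v ∈ posTangentConeAt S q) :
    v ∈ tangentConeAt ℝ S q :=
  tangentConeAt_mono_field hv

end Differentiation

section SpaceTime

/-- Space-time over `ℝ^ι`; the second factor is the time axis. -/
abbrev SpaceTime (ι : Type*) := (ι → ℝ) × ℝ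

variable {ι : Type*} [DecidableEq ι]

/-- The `i`-th spatial coordinate direction. -/
def spaceDir (i : ι) : SpaceTime ι := (Pi.single i 1, 0)

/-- The direction of increasing time. -/
def timeDir : SpaceTime ι := (0, 1)

theorem spaceDir_fst_apply (i k : ι) : (spaceDir i : SpaceTime ι).1 k = if i = k then 1 else 0 := by
  simp [spaceDir, Pi.single_apply, eq_comm]

@[simp]
theorem spaceDir_snd (i : ι) : (spaceDir i : SpaceTime ι).2 = 0 := rfl

theorem timeDir_fst {ι : Type*} : (timeDir : SpaceTime ι).1 = 0 := rfl

@[simp]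
theorem timeDir_snd {ι : Type*} : (timeDir : SpaceTime ι).2 = 1 := rfl

variable [Fintype ι] {a : ι → ι → ℝ → ℝ} {β : ι → ℝ → ℝ} {γ : ℝ → ℝ} {u : SpaceTime ι → ℝ}

/-- The parabolic operator `∂ₜ − ∑ aᵢⱼ∂ᵢ∂ⱼ + ∑ βᵢ∂ᵢ + γ` at time `t`, as a function of the value
`z`, the gradient `P` and the Hessian `H` of its argument. Separating it from the derivatives lets
it be evaluated on one-sided derivatives at the boundary. -/
noncomputable def parabolicJet (a : ι → ι → ℝ → ℝ) (β : ι → ℝ → ℝ) (γ : ℝ → ℝ) (t z : ℝ)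
    (P : SpaceTime ι →L[ℝ] ℝ) (H : SpaceTime ι →L[ℝ] SpaceTime ι →L[ℝ] ℝ) : ℝ :=
  P timeDir - ∑ i, ∑ j, a i j t * H (spaceDir i) (spaceDir j)
    + ∑ i, β i t * P (spaceDir i) + γ t * z

/-- The parabolic operator of `parabolicOp`, in terms of Fréchet derivatives on space-time. -/
noncomputable def spacetimeOp (a : ι → ι → ℝ → ℝ) (β : ι → ℝ → ℝ) (γ : ℝ → ℝ)
    (u : SpaceTime ι → ℝ) (q : SpaceTime ι) : ℝ :=
  parabolicJet a β γ q.2 (u q) (fderiv ℝ u q) (fderiv ℝ (fderiv ℝ u) q)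

theorem sum_sum_apply_spaceDir (H : SpaceTime ι →L[ℝ] SpaceTime ι →L[ℝ] ℝ) (ξ : ι → ℝ) :
    ∑ i, ∑ j, H (spaceDir i) (spaceDir j) * ξ i * ξ j = H (ξ, 0) (ξ, 0) := by
  have hξ : (ξ, (0 : ℝ)) = ∑ i, ξ i • (spaceDir i : SpaceTime ι) := by
    simp only [spaceDir, Prod.ext_iff, Prod.fst_sum, Prod.snd_sum, Prod.smul_fst, Prod.smul_snd,
      smul_zero, Finset.sum_const_zero, and_true]
    exact pi_eq_sum_univ' ξ
  rw [hξ]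
  simp only [map_sum, map_smul, sum_apply, smul_apply, smul_eq_mul, Finset.mul_sum]
  exact Finset.sum_comm.trans
    (Finset.sum_congr rfl fun i _ => Finset.sum_congr rfl fun j _ => by ring)

theorem spacetimeOp_fderiv_apply {q v : SpaceTime ι} (hu : ContDiffAt ℝ 3 u q)
    (hpde : ∀ᶠ q' in 𝓝 q, spacetimeOp a β γ u q' = 0) (hv : v.2 = 0) :
    spacetimeOp a β γ (fun q => fderiv ℝ u q v) q = 0 := by
  have hu₁ : HasFDerivAt u (fderiv ℝ u q) q :=
    (hu.differentiableAt (by norm_num)).hasFDerivAt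
  have hu₂ : HasFDerivAt (fderiv ℝ u) (fderiv ℝ (fderiv ℝ u) q) q :=
    (differentiableAt_fderiv (hu.of_le (by norm_num))).hasFDerivAt
  have hu₃ : HasFDerivAt (fderiv ℝ (fderiv ℝ u)) (fderiv ℝ (fderiv ℝ (fderiv ℝ u)) q) q :=
    (differentiableAt_fderiv (hu.fderiv_right (by norm_num))).hasFDerivAt
  have hzero : HasDerivAt (fun s : ℝ => spacetimeOp a β γ u (q + s • v)) 0 0 := by
    refine (hasDerivAt_const (0 : ℝ) (0 : ℝ)).congr_of_eventuallyEq ?_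
    filter_upwards [(tendsto_add_smul_nhds_zero q v).eventually hpde] with s hs using hs
  have htime : ∀ s : ℝ, (q + s • v).2 = q.2 := fun s => by simp [hv]
  simp only [spacetimeOp, parabolicJet, htime] at hzero
  have hderiv := ((((hasDerivAt_clm_add_smul hu₂ v timeDir).fun_sub
    (HasDerivAt.fun_sum fun i (_ : i ∈ Finset.univ) =>
      HasDerivAt.fun_sum fun j (_ : j ∈ Finset.univ) =>
        ((hasDerivAt_clm_add_smul hu₃ v (spaceDir i)).clm_apply
          (hasDerivAt_const (0 : ℝ) (spaceDir j))).const_mul (a i j q.2))).fun_add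
    (HasDerivAt.fun_sum fun i (_ : i ∈ Finset.univ) =>
      (hasDerivAt_clm_add_smul hu₂ v (spaceDir i)).const_mul (β i q.2))).fun_add
    ((hu₁.hasLineDerivAt v).const_mul (γ q.2))).unique hzero
  simpa [spacetimeOp, parabolicJet, fderiv_fderiv_apply (hu.of_le (by norm_num)),
    fderiv_fderiv_fderiv_apply hu] using hderiv

theorem parabolicJet_fderivWithin_eq_zero {O S : Set (SpaceTime ι)} (hO : IsOpen O) (hOS : O ⊆ S)
    (hSO : S ⊆ closure O) (hS : UniqueDiffOn ℝ S) (hu : ContDiffOn ℝ 2 u S)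
    (ha : ∀ i j, Continuous (a i j)) (hβ : ∀ i, Continuous (β i)) (hγ : Continuous γ)
    (hpde : ∀ q ∈ O, spacetimeOp a β γ u q = 0) {q : SpaceTime ι} (hq : q ∈ S) :
    parabolicJet a β γ q.2 (u q) (fderivWithin ℝ u S q)
      (fderivWithin ℝ (fderivWithin ℝ u S) S q) = 0 := by
  have hfderiv : ∀ q ∈ O, fderivWithin ℝ u S q = fderiv ℝ u q := fun q hq =>
    fderivWithin_of_mem_nhds (mem_of_superset (hO.mem_nhds hq) hOS)
  have hfderiv₂ : ∀ q ∈ O, fderivWithin ℝ (fderivWithin ℝ u S) S q = fderiv ℝ (fderiv ℝ u) q := by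
    intro q hq
    rw [fderivWithin_of_mem_nhds (mem_of_superset (hO.mem_nhds hq) hOS)]
    refine Filter.EventuallyEq.fderiv_eq ?_
    filter_upwards [hO.mem_nhds hq] with q' hq' using hfderiv q' hq'
  have hcont : ContinuousOn u S := hu.continuousOn
  have hu₁ : ContDiffOn ℝ 1 (fderivWithin ℝ u S) S := hu.fderivWithin hS (by norm_num)
  have hcont₁ : ContinuousOn (fderivWithin ℝ u S) S := hu₁.continuousOn
  have hcont₂ : ContinuousOn (fderivWithin ℝ (fderivWithin ℝ u S) S) S :=
    (hu₁.fderivWithin hS (m := 0) (by norm_num)).continuousOn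
  refine EqOn.of_subset_closure (s := O) (f := fun q => parabolicJet a β γ q.2 (u q)
    (fderivWithin ℝ u S q) (fderivWithin ℝ (fderivWithin ℝ u S) S q)) (g := fun _ => 0)
    (fun q hq => ?_) ?_ continuousOn_const hOS hSO hq
  · simpa only [spacetimeOp, hfderiv q hq, hfderiv₂ q hq] using hpde q hq
  · unfold parabolicJet
    fun_prop

end SpaceTime

section Slices

variable {m : ℕ} {u : SpaceTime (Fin m) → ℝ} {x : Fin m → ℝ} {t : ℝ}

theorem pd1_slice (hu : DifferentiableAt ℝ u (x, t)) (i : Fin m) :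
    pd1 i (fun y => u (y, t)) x = fderiv ℝ u (x, t) (spaceDir i) := by
  have hslice : HasFDerivAt (fun y => u (y, t))
      ((fderiv ℝ u (x, t)).comp (ContinuousLinearMap.inl ℝ (Fin m → ℝ) ℝ)) x :=
    HasFDerivAt.comp x (g := u) hu.hasFDerivAt (hasFDerivAt_prodMk_left x t)
  simp [pd1, hslice.fderiv, spaceDir]

theorem pd2_slice (hu : ContDiffAt ℝ 2 u (x, t)) (i j : Fin m) :
    pd2 i j (fun y => u (y, t)) x = fderiv ℝ (fderiv ℝ u) (x, t) (spaceDir i) (spaceDir j) := by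
  have hdiff := differentiableAt_fderiv hu
  have hnear : (fun y => pd1 j (fun y => u (y, t)) y) =ᶠ[𝓝 x]
      fun y => fderiv ℝ u (y, t) (spaceDir j) := by
    filter_upwards [(Continuous.prodMk_left t).continuousAt.eventually
      (hu.eventually (by simp))] with y hy
    exact pd1_slice (hy.differentiableAt two_ne_zero) j
  calc pd2 i j (fun y => u (y, t)) x
      = pd1 i (fun y => fderiv ℝ u (y, t) (spaceDir j)) x := by rw [pd2, pd1, hnear.fderiv_eq, pd1]
    _ = fderiv ℝ (fun q => fderiv ℝ u q (spaceDir j)) (x, t) (spaceDir i) :=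
      pd1_slice (u := fun q => fderiv ℝ u q (spaceDir j))
        (hdiff.clm_apply (differentiableAt_const _)) i
    _ = _ := by
      rw [fderiv_clm_apply hdiff (differentiableAt_const _)]
      simp

theorem parabolicOp_eq_spacetimeOp (a : Fin m → Fin m → ℝ → ℝ) (β : Fin m → ℝ → ℝ) (γ : ℝ → ℝ)
    (hu : ContDiffAt ℝ 2 u (x, t)) :
    parabolicOp a β γ (fun y s => u (y, s)) x t = spacetimeOp a β γ u (x, t) := by
  have hdiff := hu.differentiableAt two_ne_zero
  have htime : deriv (fun s => u (x, s)) t = fderiv ℝ u (x, t) timeDir :=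
    (hdiff.hasFDerivAt.comp_hasDerivAt t ((hasDerivAt_const t x).prodMk (hasDerivAt_id t))).deriv
  simp only [parabolicOp, spacetimeOp, parabolicJet, htime, pd1_slice hdiff, pd2_slice hu]

theorem transOp_eq_parabolicOp {n : ℕ} (p : ℝ) (a : Fin (n + 1) → Fin (n + 1) → ℝ → ℝ)
    (b : Fin (n + 1) → ℝ → ℝ) (c : ℝ → ℝ) :
    transOp p a b c = parabolicOp a (fun i t => 2 * p * a i (Fin.last n) t + b i t)
      (fun t => c t - p * b (Fin.last n) t - p ^ 2 * a (Fin.last n) (Fin.last n) t) := by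
  ext ε x t
  rw [transOp, parabolicOp, ← Finset.sum_erase_add Finset.univ
    (fun i => (2 * p * a i (Fin.last n) t + b i t) * pd1 i (fun y => ε y t) x)
    (Finset.mem_univ (Fin.last n))]
  ring

end Slices

section CoordinateDerivative

variable {ι : Type*} [DecidableEq ι] {k : ι} {I : Set ℝ} {S S' : Set (SpaceTime ι)}
  {u : SpaceTime ι → ℝ} {q : SpaceTime ι}

/-- The derivative of `u` in the `k`-th space direction, taken within `S`. -/
noncomputable def pdWithin (k : ι) (S : Set (SpaceTime ι)) (u : SpaceTime ι → ℝ)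
    (q : SpaceTime ι) : ℝ :=
  fderivWithin ℝ u S q (spaceDir k)

/-- The points obtained from `q` by letting its `k`-th space coordinate range over `I`. -/
def coordinateSegment (k : ι) (I : Set ℝ) (q : SpaceTime ι) : Set (SpaceTime ι) :=
  (fun s => (Function.update q.1 k s, q.2)) '' I

theorem mem_coordinateSegment (hqI : q.1 k ∈ I) : q ∈ coordinateSegment k I q :=
  ⟨q.1 k, hqI, by simp⟩

theorem pdWithin_subset (hS : S ⊆ S') (hu : DifferentiableWithinAt ℝ u S' q)
    (hunique : UniqueDiffWithinAt ℝ S q) : pdWithin k S u q = pdWithin k S' u q := by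
  rw [pdWithin, pdWithin, fderivWithin_subset hS hunique hu]

theorem pdWithin_of_mem_nhds (hS : S ∈ 𝓝 q) : pdWithin k S u q = fderiv ℝ u q (spaceDir k) := by
  rw [pdWithin, fderivWithin_of_mem_nhds hS]

variable [Fintype ι]

theorem spaceDir_mem_tangentConeAt_coordinateSegment (hI : UniqueDiffWithinAt ℝ I (q.1 k)) :
    spaceDir k ∈ tangentConeAt ℝ (coordinateSegment k I q) q := by
  have hline : HasFDerivWithinAt (fun s => (Function.update q.1 k s, q.2))
      (ContinuousLinearMap.toSpanSingleton ℝ (spaceDir k)) I (q.1 k) :=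
    ((hasDerivAt_update q.1 k (q.1 k)).prodMk
      (hasDerivAt_const (q.1 k) q.2)).hasFDerivAt.hasFDerivWithinAt
  have hone : (1 : ℝ) ∈ tangentConeAt ℝ I (q.1 k) := by
    rw [tangentConeAt_eq_univ (uniqueDiffWithinAt_iff_accPt.1 hI)]
    trivial
  simpa [coordinateSegment] using hline.mapsTo_tangent_cone hone

theorem pdWithin_eq_zero_of_eqOn_coordinateSegment (hu : DifferentiableWithinAt ℝ u S q)
    (hI : UniqueDiffWithinAt ℝ I (q.1 k)) (hqI : q.1 k ∈ I) (hS : coordinateSegment k I q ⊆ S)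
    (hzero : EqOn u 0 (coordinateSegment k I q)) : pdWithin k S u q = 0 :=
  apply_eq_zero_of_eqOn_zero hu.hasFDerivWithinAt hS hzero (mem_coordinateSegment hqI)
    (spaceDir_mem_tangentConeAt_coordinateSegment hI)

theorem fderivWithin_slice_eq_pdWithin {Ω : Set (ι → ℝ)} {J : Set ℝ} {x : ι → ℝ} {t : ℝ}
    (hu : DifferentiableWithinAt ℝ u (Ω ×ˢ J) (x, t)) (ht : t ∈ J)
    (hdir : spaceDir k ∈ tangentConeAt ℝ (Ω ×ˢ J) (x, t)) :
    fderivWithin ℝ (fun y => u (y, t)) Ω x (Pi.single k 1) = pdWithin k (Ω ×ˢ J) u (x, t) := by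
  have hslice : HasFDerivWithinAt (fun y => u (y, t))
      ((fderivWithin ℝ u (Ω ×ˢ J) (x, t)).comp (ContinuousLinearMap.inl ℝ _ ℝ)) Ω x :=
    HasFDerivWithinAt.comp x (g := u) hu.hasFDerivWithinAt
      (hasFDerivAt_prodMk_left x t).hasFDerivWithinAt fun _ hy => ⟨hy, ht⟩
  have hsingle : Pi.single k 1 ∈ tangentConeAt ℝ Ω x :=
    tangentConeAt_mono (fst_image_prod_subset Ω J)
      ((hasFDerivAt_fst (𝕜 := ℝ) (p := (x, t))).hasFDerivWithinAt.mapsTo_tangent_cone hdir)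
  rw [fderivWithin_apply_of_mem_tangentConeAt hslice hsingle]
  rfl

end CoordinateDerivative

section WeightedSquare

variable {ι : Type*} [Fintype ι] {k : ι} {φ ψ : ℝ → ℝ} {N : SpaceTime ι → ℝ} {q v : SpaceTime ι}

/-- The square of `N` weighted by `φ` in the `k`-th space coordinate and by `ψ` in time. -/
def weightedSq (k : ι) (φ ψ : ℝ → ℝ) (N : SpaceTime ι → ℝ) (q : SpaceTime ι) : ℝ :=
  N q ^ 2 * φ (q.1 k) * ψ q.2

theorem mem_posTangentConeAt_past (hv : v.2 ≤ 0) :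
    v ∈ posTangentConeAt {p : SpaceTime ι | p.2 ≤ q.2} q := by
  refine mem_posTangentConeAt_of_eventually ?_
  filter_upwards [self_mem_nhdsWithin] with s hs
  simpa using mul_nonpos_of_nonneg_of_nonpos (le_of_lt hs) hv

theorem first_order_of_isLocalMaxOn_weightedSq {S : Set (SpaceTime ι)}
    {L : SpaceTime ι →L[ℝ] ℝ} (hN : HasFDerivWithinAt N L S q)
    (hφ : DifferentiableAt ℝ φ (q.1 k)) (hφ_pos : 0 < φ (q.1 k))
    (hψ : DifferentiableAt ℝ ψ q.2) (hψ_pos : 0 < ψ q.2)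
    (hmax : IsLocalMaxOn (weightedSq k φ ψ N) S q) (hv : v ∈ posTangentConeAt S q) :
    2 * N q * L v + N q ^ 2 * (logDeriv φ (q.1 k) * v.1 k + logDeriv ψ q.2 * v.2) ≤ 0 := by
  have hφ' : HasFDerivWithinAt (fun p : SpaceTime ι => φ (p.1 k)) _ S q :=
    (hφ.hasDerivAt.comp_hasFDerivAt q (((ContinuousLinearMap.proj k).comp
      (ContinuousLinearMap.fst ℝ (ι → ℝ) ℝ)).hasFDerivAt)).hasFDerivWithinAt
  have hψ' : HasFDerivWithinAt (fun p : SpaceTime ι => ψ p.2) _ S q :=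
    (hψ.hasDerivAt.comp_hasFDerivAt q
      (ContinuousLinearMap.snd ℝ (ι → ℝ) ℝ).hasFDerivAt).hasFDerivWithinAt
  have hle := hmax.hasFDerivWithinAt_nonpos (((hN.pow 2).mul hφ').mul hψ') hv
  refine nonpos_of_mul_nonpos_left (le_of_eq_of_le ?_ hle) (mul_pos hφ_pos hψ_pos)
  simp only [logDeriv_apply, Pi.mul_apply, add_apply, smul_apply, smul_eq_mul, nsmul_eq_mul,
    ContinuousLinearMap.comp_apply, ContinuousLinearMap.proj_apply, ContinuousLinearMap.coe_fst',
    ContinuousLinearMap.coe_snd']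
  field_simp
  ring

theorem second_order_of_isLocalMax_weightedSq (hN : ContDiffAt ℝ 2 N q)
    (hφ : ContDiffAt ℝ 2 φ (q.1 k)) (hφ_pos : 0 < φ (q.1 k)) (hψ_pos : 0 < ψ q.2) (hv : v.2 = 0)
    (hmax : IsLocalMax (fun s : ℝ => weightedSq k φ ψ N (q + s • v)) 0) :
    2 * N q * fderiv ℝ (fderiv ℝ N) q v v ≤ N q ^ 2 *
      (3 / 2 * logDeriv φ (q.1 k) ^ 2 - deriv (deriv φ) (q.1 k) / φ (q.1 k)) * v.1 k ^ 2 := by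
  have hφ' : ∀ᶠ s in 𝓝 (0 : ℝ), HasDerivAt (fun s => φ (q.1 k + s * v.1 k) * ψ q.2)
      (deriv φ (q.1 k + s * v.1 k) * v.1 k * ψ q.2) s := by
    filter_upwards [eventually_hasDerivAt_add_smul (hφ.of_le one_le_two) (v.1 k)] with s hs
    simpa [mul_comm (v.1 k)] using hs.mul_const (ψ q.2)
  have hφ'' : HasDerivAt (fun s => deriv φ (q.1 k + s * v.1 k) * v.1 k * ψ q.2)
      (deriv (deriv φ) (q.1 k) * v.1 k * v.1 k * ψ q.2) 0 := by
    have hderiv : DifferentiableAt ℝ (deriv φ) (q.1 k) :=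
      (differentiableAt_fderiv hφ).clm_apply (differentiableAt_const 1)
    have hline : HasDerivAt (fun s => deriv φ (q.1 k + s * v.1 k))
        (deriv (deriv φ) (q.1 k) * v.1 k) 0 := by
      simpa [HasLineDerivAt, mul_comm (v.1 k)] using hderiv.hasFDerivAt.hasLineDerivAt (v.1 k)
    exact (hline.mul_const _).mul_const _
  have hmax' : IsLocalMax (fun s : ℝ => N (q + s • v) ^ 2 * (φ (q.1 k + s * v.1 k) * ψ q.2)) 0 := by
    simpa [weightedSq, hv, mul_assoc] using hmax
  have hle := second_deriv_le_of_isLocalMax_sq_mul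
    (eventually_hasDerivAt_add_smul (hN.of_le one_le_two) v)
    (hasDerivAt_clm_add_smul (differentiableAt_fderiv hN).hasFDerivAt v v) hφ' hφ''
    (by simpa using mul_pos hφ_pos hψ_pos) hmax'
  rw [zero_smul, add_zero, zero_mul, add_zero] at hle
  refine hle.trans_eq ?_
  rw [logDeriv_apply]
  field_simp

/-- The bound on the logarithmic derivative of the time weight above which an interior maximum of a
weighted square is impossible, for an operator with coefficients `A` of `∂ₖ²`, `B` of `∂ₖ` and `C`
of order zero. -/
noncomputable def criticalRate (A B C : ℝ) (φ : ℝ → ℝ) (x : ℝ) : ℝ :=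
  A * (deriv (deriv φ) x / φ x) - 3 / 2 * A * logDeriv φ x ^ 2 + 2 * C - B * logDeriv φ x

end WeightedSquare

section InteriorMaximum

variable {ι : Type*} [Fintype ι] [DecidableEq ι] {k : ι} {φ ψ : ℝ → ℝ} {N : SpaceTime ι → ℝ}
  {q : SpaceTime ι}

theorem drift_eq_of_isLocalMaxOn_weightedSq {L : SpaceTime ι →L[ℝ] ℝ} (hN : HasFDerivAt N L q)
    (hφ : DifferentiableAt ℝ φ (q.1 k)) (hφ_pos : 0 < φ (q.1 k))
    (hψ : DifferentiableAt ℝ ψ q.2) (hψ_pos : 0 < ψ q.2)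
    (hmax : IsLocalMaxOn (weightedSq k φ ψ N) {p | p.2 ≤ q.2} q) (B : ι → ℝ) :
    2 * N q * ∑ i, B i * L (spaceDir i) = -(N q ^ 2 * (B k * logDeriv φ (q.1 k))) := by
  have hgrad : ∀ i, 2 * N q * L (spaceDir i) =
      -(N q ^ 2 * (logDeriv φ (q.1 k) * if i = k then 1 else 0)) := by
    intro i
    have hfirst : ∀ v : SpaceTime ι, v.2 = 0 →
        2 * N q * L v + N q ^ 2 * (logDeriv φ (q.1 k) * v.1 k + logDeriv ψ q.2 * v.2) ≤ 0 :=
      fun v hv => first_order_of_isLocalMaxOn_weightedSq hN.hasFDerivWithinAt hφ hφ_pos hψ hψ_pos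
        hmax (mem_posTangentConeAt_past hv.le)
    have hpos := hfirst (spaceDir i) (spaceDir_snd i)
    have hneg := hfirst (-spaceDir i) (by simp)
    rw [map_neg, Prod.fst_neg, Prod.snd_neg, Pi.neg_apply] at hneg
    rw [spaceDir_fst_apply, spaceDir_snd] at hpos hneg
    linarith
  calc 2 * N q * ∑ i, B i * L (spaceDir i) = ∑ i, B i * (2 * N q * L (spaceDir i)) := by
        rw [Finset.mul_sum]
        exact Finset.sum_congr rfl fun i _ => by ring
    _ = -(N q ^ 2 * (B k * logDeriv φ (q.1 k))) := by
        simp only [hgrad, mul_ite, mul_one, mul_zero, mul_neg, Finset.sum_neg_distrib,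
          Finset.sum_ite_eq', Finset.mem_univ, if_true]
        ring

theorem diffusion_le_of_isLocalMaxOn_weightedSq {A : ι → ι → ℝ}
    (hA : ∀ ξ : ι → ℝ, 0 ≤ ∑ i, ∑ j, A i j * ξ i * ξ j) (hN : ContDiffAt ℝ 2 N q)
    (hφ : ContDiffAt ℝ 2 φ (q.1 k)) (hφ_pos : 0 < φ (q.1 k)) (hψ_pos : 0 < ψ q.2)
    (hmax : IsLocalMaxOn (weightedSq k φ ψ N) {p | p.2 ≤ q.2} q) :
    2 * N q * ∑ i, ∑ j, A i j * fderiv ℝ (fderiv ℝ N) q (spaceDir i) (spaceDir j) ≤ N q ^ 2 *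
      (3 / 2 * logDeriv φ (q.1 k) ^ 2 - deriv (deriv φ) (q.1 k) / φ (q.1 k)) * A k k := by
  have hsymm : IsSymmSndFDerivAt ℝ N q :=
    hN.isSymmSndFDerivAt (by rw [minSmoothness_of_isRCLikeNormedField])
  have hline : ∀ v : SpaceTime ι, v.2 = 0 →
      IsLocalMax (fun s : ℝ => weightedSq k φ ψ N (q + s • v)) 0 := fun v hv => by
    have hlim : Tendsto (fun s : ℝ => q + s • v) (𝓝 0) (𝓝[{p | p.2 ≤ q.2}] q) :=
      tendsto_nhdsWithin_iff.2 ⟨tendsto_add_smul_nhds_zero q v, Eventually.of_forall fun s => by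
        simp [hv]⟩
    simpa [IsLocalMax, IsMaxFilter] using hlim.eventually hmax
  calc 2 * N q * ∑ i, ∑ j, A i j * fderiv ℝ (fderiv ℝ N) q (spaceDir i) (spaceDir j)
      = ∑ i, ∑ j, A i j * (2 * N q * fderiv ℝ (fderiv ℝ N) q (spaceDir i) (spaceDir j)) := by
        simp only [Finset.mul_sum, mul_left_comm]
    _ ≤ _ := sum_mul_le_of_quadraticForm_le hA (fun i j => by rw [hsymm.eq]) fun ξ => by
        have hξ := second_order_of_isLocalMax_weightedSq hN hφ hφ_pos hψ_pos rfl (hline (ξ, 0) rfl)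
        rw [← sum_sum_apply_spaceDir] at hξ
        simpa only [Finset.mul_sum, mul_assoc] using hξ

theorem eq_zero_of_isLocalMaxOn_weightedSq {a : ι → ι → ℝ → ℝ} {β : ι → ℝ → ℝ} {γ : ℝ → ℝ}
    (ha : ∀ ξ : ι → ℝ, 0 ≤ ∑ i, ∑ j, a i j q.2 * ξ i * ξ j) (hN : ContDiffAt ℝ 2 N q)
    (hpde : spacetimeOp a β γ N q = 0) (hφ : ContDiffAt ℝ 2 φ (q.1 k)) (hφ_pos : 0 < φ (q.1 k))
    (hψ : DifferentiableAt ℝ ψ q.2) (hψ_pos : 0 < ψ q.2)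
    (hrate : logDeriv ψ q.2 < criticalRate (a k k q.2) (β k q.2) (γ q.2) φ (q.1 k))
    (hmax : IsLocalMaxOn (weightedSq k φ ψ N) {p | p.2 ≤ q.2} q) : N q = 0 := by
  have hN' : HasFDerivAt N (fderiv ℝ N q) q := (hN.differentiableAt two_ne_zero).hasFDerivAt
  have hφ' : DifferentiableAt ℝ φ (q.1 k) := hφ.differentiableAt two_ne_zero
  have hdiffusion := diffusion_le_of_isLocalMaxOn_weightedSq ha hN hφ hφ_pos hψ_pos hmax
  have hdrift := drift_eq_of_isLocalMaxOn_weightedSq hN' hφ' hφ_pos hψ hψ_pos hmax (β · q.2)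
  have htime : 2 * N q * fderiv ℝ N q timeDir + N q ^ 2 * logDeriv ψ q.2 ≥ 0 := by
    have hfirst := first_order_of_isLocalMaxOn_weightedSq hN'.hasFDerivWithinAt hφ' hφ_pos hψ hψ_pos
      hmax (mem_posTangentConeAt_past (v := -timeDir) (by simp))
    simp only [map_neg, Prod.fst_neg, Prod.snd_neg, Pi.neg_apply, timeDir_fst, timeDir_snd,
      Pi.zero_apply] at hfirst
    linarith
  by_contra hne
  have hsq : 0 < N q ^ 2 := by positivity
  have hcompare : N q ^ 2 * criticalRate (a k k q.2) (β k q.2) (γ q.2) φ (q.1 k) ≤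
      N q ^ 2 * logDeriv ψ q.2 := by
    rw [spacetimeOp, parabolicJet] at hpde
    rw [criticalRate]
    linear_combination htime + hdiffusion - hdrift + 2 * N q * hpde
  exact hrate.not_ge (le_of_mul_le_mul_left hcompare hsq)

end InteriorMaximum

section HalfSpace

variable {ι : Type*} {k : ι} {ℓ : ℝ} {U : Set (SpaceTime ι)} {q v : SpaceTime ι}

/-- The part of `U` lying in the closed half-space `ℓ ≤ xₖ`. -/
def halfSpacePart (k : ι) (ℓ : ℝ) (U : Set (SpaceTime ι)) : Set (SpaceTime ι) :=
  {q | ℓ ≤ q.1 k} ∩ U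

/-- The part of `U` lying on the hyperplane `xₖ = ℓ`. -/
def hyperplanePart (k : ι) (ℓ : ℝ) (U : Set (SpaceTime ι)) : Set (SpaceTime ι) :=
  {q | q.1 k = ℓ} ∩ U

theorem hyperplanePart_subset_halfSpacePart : hyperplanePart k ℓ U ⊆ halfSpacePart k ℓ U :=
  inter_subset_inter_left U fun _ hq => ge_of_eq hq

theorem isOpen_lt_coordinate (k : ι) (ℓ : ℝ) : IsOpen {q : SpaceTime ι | ℓ < q.1 k} :=
  isOpen_lt continuous_const (by fun_prop)

theorem openHalfSpacePart_subset : {q : SpaceTime ι | ℓ < q.1 k} ∩ U ⊆ halfSpacePart k ℓ U :=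
  inter_subset_inter_left U (ofPred_subset_ofPred.2 fun _ => le_of_lt)

theorem uniqueDiffOn_halfSpacePart (hU : IsOpen U) : UniqueDiffOn ℝ (halfSpacePart k ℓ U) := by
  refine (uniqueDiffOn_convex ?_ ?_).inter hU
  · exact convex_halfSpace_ge ((LinearMap.proj k).comp (LinearMap.fst ℝ (ι → ℝ) ℝ)).isLinear ℓ
  · exact ⟨(fun _ => ℓ + 1, 0), interior_maximal (ofPred_subset_ofPred.2 fun _ => le_of_lt)
      (isOpen_lt_coordinate k ℓ) (lt_add_one ℓ)⟩

theorem halfSpacePart_subset_closure (hU : IsOpen U) :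
    halfSpacePart k ℓ U ⊆ closure ({q | ℓ < q.1 k} ∩ U) := by
  classical
  rintro q ⟨hq, hqU⟩
  refine mem_closure_of_tendsto
    ((tendsto_add_smul_nhds_zero q (spaceDir k)).mono_left (nhdsWithin_le_nhds (s := Ioi 0))) ?_
  filter_upwards [eventually_add_smul_mem hU hqU (spaceDir k), self_mem_nhdsWithin] with s hsU hs
  refine ⟨?_, hsU⟩
  have hq : ℓ ≤ q.1 k := hq
  simpa [spaceDir] using hq.trans_lt (lt_add_of_pos_right _ hs)

variable [Fintype ι]

theorem mem_posTangentConeAt_halfSpacePart (hU : IsOpen U) (hq : q ∈ halfSpacePart k ℓ U)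
    (hvk : 0 ≤ v.1 k) (hv : v.2 ≤ 0) :
    v ∈ posTangentConeAt (halfSpacePart k ℓ U ∩ {p | p.2 ≤ q.2}) q := by
  refine mem_posTangentConeAt_of_eventually ?_
  filter_upwards [eventually_add_smul_mem hU hq.2 v, self_mem_nhdsWithin] with s hsU hs
  have hs : 0 < s := hs
  exact ⟨⟨le_add_of_le_of_nonneg hq.1 (mul_nonneg hs.le hvk), hsU⟩,
    add_le_of_nonpos_right (mul_nonpos_of_nonneg_of_nonpos hs.le hv)⟩

theorem mem_tangentConeAt_hyperplanePart (hU : IsOpen U) (hq : q ∈ hyperplanePart k ℓ U)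
    (hv : v.1 k = 0) : v ∈ tangentConeAt ℝ (hyperplanePart k ℓ U) q := by
  refine mem_tangentConeAt_of_mem_posTangentConeAt (mem_posTangentConeAt_of_eventually ?_)
  filter_upwards [eventually_add_smul_mem hU hq.2 v] with s hsU
  exact ⟨by simpa [hv] using hq.1, hsU⟩

end HalfSpace

section FaceMaximum

variable {ι : Type*} [Fintype ι] {k : ι} {ℓ : ℝ} {U : Set (SpaceTime ι)}
  {a : ι → ι → ℝ → ℝ} {β : ι → ℝ → ℝ} {γ : ℝ → ℝ} {u : SpaceTime ι → ℝ} {φ ψ : ℝ → ℝ}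
  {q v w : SpaceTime ι}

theorem fderivWithin_halfSpacePart_apply_eq_zero (hU : IsOpen U)
    (hu : DifferentiableOn ℝ u (halfSpacePart k ℓ U)) (hzero : EqOn u 0 (hyperplanePart k ℓ U))
    (hq : q ∈ hyperplanePart k ℓ U) (hv : v.1 k = 0) :
    fderivWithin ℝ u (halfSpacePart k ℓ U) q v = 0 :=
  apply_eq_zero_of_eqOn_zero (hu q (hyperplanePart_subset_halfSpacePart hq)).hasFDerivWithinAt
    hyperplanePart_subset_halfSpacePart hzero hq (mem_tangentConeAt_hyperplanePart hU hq hv)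

theorem fderivWithin_fderivWithin_halfSpacePart_apply_eq_zero (hU : IsOpen U)
    (hu : ContDiffOn ℝ 2 u (halfSpacePart k ℓ U)) (hzero : EqOn u 0 (hyperplanePart k ℓ U))
    (hq : q ∈ hyperplanePart k ℓ U) (hv : v.1 k = 0) (hw : w.1 k = 0) :
    fderivWithin ℝ (fderivWithin ℝ u (halfSpacePart k ℓ U)) (halfSpacePart k ℓ U) q v w = 0 := by
  have hu₂ := ((hu.fderivWithin (uniqueDiffOn_halfSpacePart hU) (m := 1)
    (by norm_num)).differentiableOn one_ne_zero q
      (hyperplanePart_subset_halfSpacePart hq)).hasFDerivWithinAt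
  simpa using apply_eq_zero_of_eqOn_zero (hu₂.clm_apply (hasFDerivWithinAt_const w q _))
    hyperplanePart_subset_halfSpacePart
    (fun p hp => fderivWithin_halfSpacePart_apply_eq_zero hU (hu.differentiableOn two_ne_zero)
      hzero hp hw) hq (mem_tangentConeAt_hyperplanePart hU hq hv)

variable [DecidableEq ι]

theorem parabolicJet_eq_of_normal {t : ℝ} {P : SpaceTime ι →L[ℝ] ℝ}
    {H : SpaceTime ι →L[ℝ] SpaceTime ι →L[ℝ] ℝ} (hP : ∀ v : SpaceTime ι, v.1 k = 0 → P v = 0)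
    (hH : ∀ i j, ¬(i = k ∧ j = k) → H (spaceDir i) (spaceDir j) = 0) :
    parabolicJet a β γ t 0 P H =
      β k t * P (spaceDir k) - a k k t * H (spaceDir k) (spaceDir k) := by
  have hdiffusion : ∑ i, ∑ j, a i j t * H (spaceDir i) (spaceDir j) =
      a k k t * H (spaceDir k) (spaceDir k) := by
    rw [Finset.sum_eq_single k, Finset.sum_eq_single k] <;> simp +contextual [hH]
  have hdrift : ∑ i, β i t * P (spaceDir i) = β k t * P (spaceDir k) := by
    rw [Finset.sum_eq_single k] <;> simp +contextual [hP, spaceDir_fst_apply]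
  rw [parabolicJet, hdiffusion, hdrift, hP timeDir rfl]
  ring

theorem diffusion_eq_drift_on_hyperplanePart (hU : IsOpen U) (ha : ∀ i j, Continuous (a i j))
    (hβ : ∀ i, Continuous (β i)) (hγ : Continuous γ) (hu : ContDiffOn ℝ 2 u (halfSpacePart k ℓ U))
    (hpde : ∀ p ∈ {p | ℓ < p.1 k} ∩ U, spacetimeOp a β γ u p = 0)
    (hzero : EqOn u 0 (hyperplanePart k ℓ U)) (hq : q ∈ hyperplanePart k ℓ U)
    (hmixed : ∀ i ≠ k, fderivWithin ℝ (fderivWithin ℝ u (halfSpacePart k ℓ U))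
      (halfSpacePart k ℓ U) q (spaceDir i) (spaceDir k) = 0) :
    a k k q.2 * fderivWithin ℝ (fderivWithin ℝ u (halfSpacePart k ℓ U)) (halfSpacePart k ℓ U) q
      (spaceDir k) (spaceDir k) = β k q.2 * pdWithin k (halfSpacePart k ℓ U) u q := by
  have hqS : q ∈ halfSpacePart k ℓ U := hyperplanePart_subset_halfSpacePart hq
  have hS : UniqueDiffOn ℝ (halfSpacePart k ℓ U) := uniqueDiffOn_halfSpacePart hU
  have hsymm : IsSymmSndFDerivWithinAt ℝ u (halfSpacePart k ℓ U) q := by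
    refine (hu q hqS).isSymmSndFDerivWithinAt (by rw [minSmoothness_of_isRCLikeNormedField]) hS
      (closure_mono ?_ (halfSpacePart_subset_closure hU hqS)) hqS
    exact interior_maximal openHalfSpacePart_subset
      ((isOpen_lt_coordinate k ℓ).inter hU)
  have hjet := parabolicJet_fderivWithin_eq_zero ((isOpen_lt_coordinate k ℓ).inter hU)
    openHalfSpacePart_subset (halfSpacePart_subset_closure hU) hS hu ha
    hβ hγ hpde hqS
  rw [hzero hq, Pi.zero_apply, parabolicJet_eq_of_normal (k := k)] at hjet
  · exact (sub_eq_zero.1 hjet).symm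
  · exact fun v hv => fderivWithin_halfSpacePart_apply_eq_zero hU
      (hu.differentiableOn two_ne_zero) hzero hq hv
  · intro i j hij
    by_cases hi : i = k
    · have hj : j ≠ k := fun hj => hij ⟨hi, hj⟩
      rw [hi, hsymm.eq, hmixed j hj]
    · by_cases hj : j = k
      · rw [hj, hmixed i hi]
      · exact fderivWithin_fderivWithin_halfSpacePart_apply_eq_zero hU hu hzero hq
          (by simp [spaceDir_fst_apply, hi]) (by simp [spaceDir_fst_apply, hj])

/-- On the face both `u` and its tangential derivatives vanish, and the mixed second derivatives
vanish by maximality, so the equation reduces there to `aₖₖ ∂ₖ²u = βₖ ∂ₖu`. -/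
theorem pdWithin_eq_zero_of_isLocalMaxOn_weightedSq (hU : IsOpen U)
    (ha : ∀ i j, Continuous (a i j)) (hβ : ∀ i, Continuous (β i)) (hγ : Continuous γ)
    (hu : ContDiffOn ℝ 2 u (halfSpacePart k ℓ U))
    (hpde : ∀ p ∈ {p | ℓ < p.1 k} ∩ U, spacetimeOp a β γ u p = 0)
    (hzero : EqOn u 0 (hyperplanePart k ℓ U)) (hq : q ∈ hyperplanePart k ℓ U)
    (ha_pos : 0 < a k k q.2) (hφ : DifferentiableAt ℝ φ ℓ) (hφ_pos : 0 < φ ℓ)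
    (hψ : DifferentiableAt ℝ ψ q.2) (hψ_pos : 0 < ψ q.2)
    (hsign : 0 < 2 * β k q.2 / a k k q.2 + logDeriv φ ℓ)
    (hmax : IsLocalMaxOn (weightedSq k φ ψ (pdWithin k (halfSpacePart k ℓ U) u))
      (halfSpacePart k ℓ U ∩ {p | p.2 ≤ q.2}) q) :
    pdWithin k (halfSpacePart k ℓ U) u q = 0 := by
  set S := halfSpacePart k ℓ U
  set H := fderivWithin ℝ (fderivWithin ℝ u S) S q
  set z := pdWithin k S u q
  have hqS : q ∈ S := hyperplanePart_subset_halfSpacePart hq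
  have hN : HasFDerivWithinAt (fun p => fderivWithin ℝ u S p (spaceDir k))
      (H.flip (spaceDir k)) S q := by
    have hH : HasFDerivWithinAt (fderivWithin ℝ u S) H S q :=
      ((hu.fderivWithin (uniqueDiffOn_halfSpacePart hU) (m := 1) (by norm_num)).differentiableOn
        one_ne_zero q hqS).hasFDerivWithinAt
    simpa using hH.clm_apply (hasFDerivWithinAt_const (spaceDir k) q S)
  by_contra hne
  have hfirst : ∀ v : SpaceTime ι, 0 ≤ v.1 k → v.2 = 0 →
      2 * z * H v (spaceDir k) + z ^ 2 * (logDeriv φ ℓ * v.1 k) ≤ 0 := by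
    obtain rfl : q.1 k = ℓ := hq.1
    intro v hvk hv
    simpa [hv, z, pdWithin] using first_order_of_isLocalMaxOn_weightedSq
      (hN.mono inter_subset_left) hφ hφ_pos hψ hψ_pos hmax
      (mem_posTangentConeAt_halfSpacePart hU hqS hvk hv.le)
  have hmixed : ∀ i ≠ k, H (spaceDir i) (spaceDir k) = 0 := by
    intro i hi
    have hpos := hfirst (spaceDir i) (by simp [spaceDir_fst_apply, hi]) (spaceDir_snd i)
    have hneg := hfirst (-spaceDir i) (by simp [spaceDir_fst_apply, hi]) (by simp)
    simp only [Prod.fst_neg, Pi.neg_apply, spaceDir_fst_apply, hi, if_false, map_neg, neg_zero,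
      mul_zero, add_zero, neg_apply, mul_neg, neg_nonpos] at hpos hneg
    exact (mul_eq_zero.1 (le_antisymm hpos hneg)).resolve_left (mul_ne_zero two_ne_zero hne)
  have hnormal := hfirst (spaceDir k) (by simp [spaceDir_fst_apply]) (spaceDir_snd k)
  rw [spaceDir_fst_apply, if_pos rfl, eq_div_of_mul_eq ha_pos.ne' ((mul_comm _ _).trans
    (diffusion_eq_drift_on_hyperplanePart hU ha hβ hγ hu hpde hzero hq hmixed))] at hnormal
  have hsq : 0 < z ^ 2 := by positivity
  refine (mul_pos hsq hsign).not_ge (le_of_eq_of_le ?_ hnormal)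
  change z ^ 2 * _ = 2 * z * (β k q.2 * z / a k k q.2) + _
  ring

end FaceMaximum

section Cylinder

variable {n : ℕ} {D D' : Set (Fin n → ℝ)} {I I' J J' : Set ℝ}

/-- The cylinder of points `(X, xₙ, t)` of space-time with `X ∈ D`, `xₙ ∈ I` and `t ∈ J`. -/
def parabolicCylinder (D : Set (Fin n → ℝ)) (I J : Set ℝ) : Set (SpaceTime (Fin (n + 1))) :=
  {q | Fin.init q.1 ∈ D ∧ q.1 (Fin.last n) ∈ I ∧ q.2 ∈ J}

theorem snoc_mem_parabolicCylinder {X : Fin n → ℝ} {s t : ℝ} :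
    (Fin.snoc X s, t) ∈ parabolicCylinder D I J ↔ X ∈ D ∧ s ∈ I ∧ t ∈ J := by
  simp [parabolicCylinder]

theorem parabolicCylinder_mono (hD : D ⊆ D') (hI : I ⊆ I') (hJ : J ⊆ J') :
    parabolicCylinder D I J ⊆ parabolicCylinder D' I' J' :=
  fun _ hq => ⟨hD hq.1, hI hq.2.1, hJ hq.2.2⟩

theorem right_face_subset_parabolicCylinder {a1 b1 : ℝ} (hab : a1 ≤ b1) :
    parabolicCylinder D {b1} J ⊆ parabolicCylinder D (Icc a1 b1) J :=
  parabolicCylinder_mono subset_rfl (singleton_subset_iff.2 (right_mem_Icc.2 hab)) subset_rfl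

theorem parabolicCylinder_eq_image : parabolicCylinder D I J =
    (fun z : ((Fin n → ℝ) × ℝ) × ℝ => (Fin.snoc z.1.1 z.1.2, z.2)) '' ((D ×ˢ I) ×ˢ J) := by
  ext q
  refine ⟨fun hq => ⟨((Fin.init q.1, q.1 (Fin.last n)), q.2), ⟨⟨hq.1, hq.2.1⟩, hq.2.2⟩, ?_⟩, ?_⟩
  · simp only [Fin.snoc_init_self]
  · rintro ⟨z, ⟨⟨hX, hs⟩, ht⟩, rfl⟩
    exact snoc_mem_parabolicCylinder.2 ⟨hX, hs, ht⟩

theorem continuous_snoc_prod :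
    Continuous fun z : ((Fin n → ℝ) × ℝ) × ℝ =>
      ((Fin.snoc z.1.1 z.1.2, z.2) : SpaceTime (Fin (n + 1))) :=
  (Continuous.finSnoc (by fun_prop) (by fun_prop)).prodMk continuous_snd

theorem continuous_init_fst :
    Continuous fun q : SpaceTime (Fin (n + 1)) => (Fin.init q.1 : Fin n → ℝ) :=
  continuous_fst.finInit

theorem isOpen_parabolicCylinder (hD : IsOpen D) (hI : IsOpen I) (hJ : IsOpen J) :
    IsOpen (parabolicCylinder D I J) :=
  (hD.preimage continuous_init_fst).inter
    ((hI.preimage (by fun_prop)).inter (hJ.preimage continuous_snd))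

theorem isClosed_parabolicCylinder (hD : IsClosed D) (hI : IsClosed I) (hJ : IsClosed J) :
    IsClosed (parabolicCylinder D I J) :=
  (hD.preimage continuous_init_fst).inter
    ((hI.preimage (by fun_prop)).inter (hJ.preimage continuous_snd))

theorem isCompact_parabolicCylinder (hD : IsCompact D) (hI : IsCompact I) (hJ : IsCompact J) :
    IsCompact (parabolicCylinder D I J) := by
  rw [parabolicCylinder_eq_image]
  exact ((hD.prod hI).prod hJ).image continuous_snoc_prod

theorem closure_parabolicCylinder :
    closure (parabolicCylinder D I J) =
      parabolicCylinder (closure D) (closure I) (closure J) := by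
  refine subset_antisymm (closure_minimal (parabolicCylinder_mono subset_closure subset_closure
    subset_closure) (isClosed_parabolicCylinder isClosed_closure isClosed_closure
    isClosed_closure)) ?_
  rw [parabolicCylinder_eq_image, parabolicCylinder_eq_image, ← closure_prod_eq,
    ← closure_prod_eq]
  exact image_closure_subset_closure_image continuous_snoc_prod

theorem coordinateSegment_subset_parabolicCylinder {q : SpaceTime (Fin (n + 1))}
    (hD : Fin.init q.1 ∈ D) (hJ : q.2 ∈ J) :
    coordinateSegment (Fin.last n) I q ⊆ parabolicCylinder D I J := by
  rintro _ ⟨s, hs, rfl⟩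
  exact ⟨by simpa only [Fin.init_update_last] using hD,
    by simpa only [Function.update_self] using hs, hJ⟩

theorem spaceDir_last_mem_tangentConeAt_parabolicCylinder {q : SpaceTime (Fin (n + 1))}
    (hI : UniqueDiffOn ℝ I) (hq : q ∈ parabolicCylinder D I J) :
    spaceDir (Fin.last n) ∈ tangentConeAt ℝ (parabolicCylinder D I J) q :=
  tangentConeAt_mono (coordinateSegment_subset_parabolicCylinder hq.1 hq.2.2)
    (spaceDir_mem_tangentConeAt_coordinateSegment (hI _ hq.2.1))

end Cylinder

section MaximumPrinciple

theorem isLocalMaxOn_weightedSq_of_eqOn {ι : Type*} {k : ι} {φ ψ : ℝ → ℝ}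
    {N N' : SpaceTime ι → ℝ} {S K : Set (SpaceTime ι)} {q : SpaceTime ι} (hSK : S ⊆ K)
    (hN : EqOn N N' S) (hq : q ∈ S) (hmax : IsMaxOn (weightedSq k φ ψ N) K q) :
    IsLocalMaxOn (weightedSq k φ ψ N') S q := by
  refine (hmax.on_subset hSK).localize.congr ?_ hq
  filter_upwards [self_mem_nhdsWithin] with p hp
  simp only [weightedSq, hN hp]

/-- Regularity and (possibly degenerate) ellipticity at times in `(0, T)` of the coefficients of
`parabolicOp`, with nondegeneracy in the `k`-th direction. -/
structure IsParabolicOn {ι : Type*} [Fintype ι] (k : ι) (T : ℝ) (a : ι → ι → ℝ → ℝ)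
    (β : ι → ℝ → ℝ) (γ : ℝ → ℝ) : Prop where
  continuous_diffusion : ∀ i j, Continuous (a i j)
  continuous_drift : ∀ i, Continuous (β i)
  continuous_potential : Continuous γ
  diffusion_nonneg : ∀ t ∈ Ioo 0 T, ∀ ξ : ι → ℝ, 0 ≤ ∑ i, ∑ j, a i j t * ξ i * ξ j
  diffusion_pos : ∀ t ∈ Ioo 0 T, 0 < a k k t

/-- Classical solutions, up to the boundary, of the homogeneous equation on `D × (a₁, b₁) × (0, T)`
with zero initial data and zero boundary data, except on the face `xₙ = b₁` which is left free. -/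
structure IsNullSolution {n : ℕ} (a : Fin (n + 1) → Fin (n + 1) → ℝ → ℝ)
    (β : Fin (n + 1) → ℝ → ℝ) (γ : ℝ → ℝ) (D : Set (Fin n → ℝ)) (a1 b1 T : ℝ)
    (u : SpaceTime (Fin (n + 1)) → ℝ) : Prop where
  contDiffOn : ContDiffOn ℝ 3 u (parabolicCylinder (closure D) (Icc a1 b1) (Icc 0 T))
  equation : EqOn (spacetimeOp a β γ u) 0 (parabolicCylinder D (Ioo a1 b1) (Ioo 0 T))
  left : EqOn u 0 (parabolicCylinder D {a1} (Ioo 0 T))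
  lateral : EqOn u 0 (parabolicCylinder (frontier D) (Icc a1 b1) (Icc 0 T))
  initial : EqOn u 0 (parabolicCylinder D (Ioo a1 b1) {0})

/-- Pairs of a space weight `φ` and a time weight `ψ` for which the maximum principle on
`[a₁, b₁] × [0, T]` is available, for an operator with coefficients `A` of `∂ₙ²`, `B` of `∂ₙ` and
`C` of order zero; the decay rate of `ψ` beats the critical one by the margin `δ`. -/
structure AdmissibleWeights (A B C : ℝ → ℝ) (a1 b1 T δ : ℝ) (φ ψ : ℝ → ℝ) : Prop where
  contDiff_space : ContDiff ℝ 2 φ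
  space_pos : ∀ x ∈ Icc a1 b1, 0 < φ x
  continuous_time : Continuous ψ
  differentiableAt_time : ∀ t ∈ Ioo 0 T, DifferentiableAt ℝ ψ t
  time_pos : ∀ t ∈ Icc 0 T, 0 < ψ t
  sign : ∀ t ∈ Ioo 0 T, 0 < 2 * B t / A t + logDeriv φ a1
  decay : ∀ t ∈ Ioo 0 T, ∀ x ∈ Ioo a1 b1,
    logDeriv ψ t + δ ≤ criticalRate (A t) (B t) (C t) φ x

variable {n : ℕ} {a : Fin (n + 1) → Fin (n + 1) → ℝ → ℝ} {β : Fin (n + 1) → ℝ → ℝ} {γ : ℝ → ℝ}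
  {D : Set (Fin n → ℝ)} {a1 b1 T δ M : ℝ} {u : SpaceTime (Fin (n + 1)) → ℝ} {φ ψ : ℝ → ℝ}
  {q : SpaceTime (Fin (n + 1))}

/-- The normal derivative `∂ₙu` within the closed cylinder `cl(D) × [a₁, b₁] × [0, T]`. -/
noncomputable def normalDeriv (D : Set (Fin n → ℝ)) (a1 b1 T : ℝ)
    (u : SpaceTime (Fin (n + 1)) → ℝ) : SpaceTime (Fin (n + 1)) → ℝ :=
  pdWithin (Fin.last n) (parabolicCylinder (closure D) (Icc a1 b1) (Icc 0 T)) u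

theorem IsNullSolution.differentiableOn (hu : IsNullSolution a β γ D a1 b1 T u) :
    DifferentiableOn ℝ u (parabolicCylinder (closure D) (Icc a1 b1) (Icc 0 T)) :=
  hu.contDiffOn.differentiableOn (by norm_num)

theorem IsNullSolution.continuousOn_normalDeriv (hab : a1 < b1)
    (hu : IsNullSolution a β γ D a1 b1 T u) :
    ContinuousOn (normalDeriv D a1 b1 T u)
      (parabolicCylinder (closure D) (Icc a1 b1) (Icc 0 T)) :=
  continuousOn_fderivWithin_apply (hu.contDiffOn.of_le (by norm_num)) fun _ hq =>
    spaceDir_last_mem_tangentConeAt_parabolicCylinder (uniqueDiffOn_Icc hab) hq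

theorem IsNullSolution.normalDeriv_eq_zero (hab : a1 < b1)
    (hu : IsNullSolution a β γ D a1 b1 T u)
    (hq : q ∈ parabolicCylinder (closure D) (Icc a1 b1) (Icc 0 T))
    (hzero : EqOn u 0 (coordinateSegment (Fin.last n) (Icc a1 b1) q)) :
    normalDeriv D a1 b1 T u q = 0 :=
  pdWithin_eq_zero_of_eqOn_coordinateSegment (hu.differentiableOn q hq)
    (uniqueDiffOn_Icc hab _ hq.2.1) hq.2.1
    (coordinateSegment_subset_parabolicCylinder hq.1 hq.2.2) hzero

theorem IsNullSolution.normalDeriv_eq_zero_of_mem_frontier (hab : a1 < b1)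
    (hu : IsNullSolution a β γ D a1 b1 T u)
    (hq : q ∈ parabolicCylinder (frontier D) (Icc a1 b1) (Icc 0 T)) :
    normalDeriv D a1 b1 T u q = 0 :=
  hu.normalDeriv_eq_zero hab
    (parabolicCylinder_mono frontier_subset_closure subset_rfl subset_rfl hq)
    (hu.lateral.mono (coordinateSegment_subset_parabolicCylinder hq.1 hq.2.2))

theorem IsNullSolution.normalDeriv_eq_zero_of_time_eq_zero (hab : a1 < b1)
    (hu : IsNullSolution a β γ D a1 b1 T u)
    (hq : q ∈ parabolicCylinder (closure D) (Icc a1 b1) (Icc 0 T)) (hq0 : q.2 = 0) :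
    normalDeriv D a1 b1 T u q = 0 := by
  have hzeroT : ({0} : Set ℝ) ⊆ Icc 0 T := singleton_subset_iff.2 (hq0 ▸ hq.2.2)
  have hbottom : EqOn u 0 (parabolicCylinder (closure D) (Icc a1 b1) {0}) := by
    refine hu.initial.of_subset_closure (hu.differentiableOn.continuousOn.mono
      (parabolicCylinder_mono subset_rfl subset_rfl hzeroT)) continuousOn_const
      (parabolicCylinder_mono subset_closure Ioo_subset_Icc_self subset_rfl) ?_
    rw [closure_parabolicCylinder, closure_Ioo hab.ne, closure_singleton]
  exact hu.normalDeriv_eq_zero hab hq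
    (hbottom.mono (coordinateSegment_subset_parabolicCylinder hq.1 hq0))

theorem IsNullSolution.normalDeriv_eq_zero_of_interior_max (hD : IsOpen D)
    (ha : IsParabolicOn (Fin.last n) T a β γ) (hu : IsNullSolution a β γ D a1 b1 T u)
    (hw : AdmissibleWeights (a (Fin.last n) (Fin.last n)) (β (Fin.last n)) γ a1 b1 T δ φ ψ)
    (hδ : 0 < δ) (hq : q ∈ parabolicCylinder D (Ioo a1 b1) (Ioo 0 T))
    (hmax : IsMaxOn (weightedSq (Fin.last n) φ ψ (normalDeriv D a1 b1 T u))
      (parabolicCylinder (closure D) (Icc a1 b1) (Icc 0 T) ∩ {p | p.2 ≤ q.2}) q) :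
    normalDeriv D a1 b1 T u q = 0 := by
  set O := parabolicCylinder D (Ioo a1 b1) (Ioo 0 T)
  set K := parabolicCylinder (closure D) (Icc a1 b1) (Icc 0 T)
  have hO : IsOpen O := isOpen_parabolicCylinder hD isOpen_Ioo isOpen_Ioo
  have hOK : O ⊆ K :=
    parabolicCylinder_mono subset_closure Ioo_subset_Icc_self Ioo_subset_Icc_self
  have hderiv : EqOn (normalDeriv D a1 b1 T u)
      (fun p => fderiv ℝ u p (spaceDir (Fin.last n))) O := fun p hp =>
    pdWithin_of_mem_nhds (mem_of_superset (hO.mem_nhds hp) hOK)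
  have hu3 : ContDiffAt ℝ 3 u q :=
    hu.contDiffOn.contDiffAt (mem_of_superset (hO.mem_nhds hq) hOK)
  have hlocal : IsLocalMaxOn
      (weightedSq (Fin.last n) φ ψ fun p => fderiv ℝ u p (spaceDir (Fin.last n)))
      {p | p.2 ≤ q.2} q := by
    have hpast : q ∈ O ∩ {p | p.2 ≤ q.2} := ⟨hq, le_refl q.2⟩
    rw [IsLocalMaxOn, ← nhdsWithin_inter_of_mem' (mem_nhdsWithin_of_mem_nhds (hO.mem_nhds hq)),
      inter_comm]
    exact isLocalMaxOn_weightedSq_of_eqOn (inter_subset_inter_left _ hOK)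
      (hderiv.mono inter_subset_left) hpast hmax
  rw [hderiv hq]
  exact eq_zero_of_isLocalMaxOn_weightedSq (q := q) (ha.diffusion_nonneg _ hq.2.2)
    ((hu3.fderiv_right (m := 2) (by norm_num)).clm_apply contDiffAt_const)
    (spacetimeOp_fderiv_apply hu3 (eventually_of_mem (hO.mem_nhds hq) hu.equation)
      (spaceDir_snd _))
    hw.contDiff_space.contDiffAt (hw.space_pos _ (Ioo_subset_Icc_self hq.2.1))
    (hw.differentiableAt_time _ hq.2.2) (hw.time_pos _ (Ioo_subset_Icc_self hq.2.2))
    ((lt_add_of_pos_right _ hδ).trans_le (hw.decay _ hq.2.2 _ hq.2.1)) hlocal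

theorem IsNullSolution.normalDeriv_eq_zero_of_left_max (hab : a1 < b1) (hD : IsOpen D)
    (ha : IsParabolicOn (Fin.last n) T a β γ) (hu : IsNullSolution a β γ D a1 b1 T u)
    (hw : AdmissibleWeights (a (Fin.last n) (Fin.last n)) (β (Fin.last n)) γ a1 b1 T δ φ ψ)
    (hq : q ∈ parabolicCylinder D {a1} (Ioo 0 T))
    (hmax : IsMaxOn (weightedSq (Fin.last n) φ ψ (normalDeriv D a1 b1 T u))
      (parabolicCylinder (closure D) (Icc a1 b1) (Icc 0 T) ∩ {p | p.2 ≤ q.2}) q) :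
    normalDeriv D a1 b1 T u q = 0 := by
  set U := parabolicCylinder D (Iio b1) (Ioo 0 T)
  set K := parabolicCylinder (closure D) (Icc a1 b1) (Icc 0 T)
  have hU : IsOpen U := isOpen_parabolicCylinder hD isOpen_Iio isOpen_Ioo
  have hSK : halfSpacePart (Fin.last n) a1 U ⊆ K := fun p ⟨hleft, hX, hright, ht⟩ =>
    ⟨subset_closure hX, ⟨hleft, le_of_lt hright⟩, Ioo_subset_Icc_self ht⟩
  have hderiv : EqOn (normalDeriv D a1 b1 T u)
      (pdWithin (Fin.last n) (halfSpacePart (Fin.last n) a1 U) u)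
      (halfSpacePart (Fin.last n) a1 U) := fun p hp =>
    (pdWithin_subset hSK (hu.differentiableOn p (hSK hp)) (uniqueDiffOn_halfSpacePart hU p hp)).symm
  have hqface : q ∈ hyperplanePart (Fin.last n) a1 U :=
    ⟨hq.2.1, hq.1, (mem_singleton_iff.1 hq.2.1).trans_lt hab, hq.2.2⟩
  have hqS := hyperplanePart_subset_halfSpacePart hqface
  rw [hderiv hqS]
  exact pdWithin_eq_zero_of_isLocalMaxOn_weightedSq hU ha.continuous_diffusion
    ha.continuous_drift ha.continuous_potential ((hu.contDiffOn.mono hSK).of_le (by norm_num))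
    (fun p ⟨hleft, hX, hright, ht⟩ => hu.equation ⟨hX, ⟨hleft, hright⟩, ht⟩)
    (fun p ⟨hface, hX, _, ht⟩ => hu.left ⟨hX, hface, ht⟩) hqface
    (ha.diffusion_pos _ hq.2.2) (hw.contDiff_space.differentiable (by norm_num) a1)
    (hw.space_pos _ (left_mem_Icc.2 hab.le))
    (hw.differentiableAt_time _ hq.2.2) (hw.time_pos _ (Ioo_subset_Icc_self hq.2.2))
    (hw.sign _ hq.2.2)
    (isLocalMaxOn_weightedSq_of_eqOn (inter_subset_inter_left {p | p.2 ≤ q.2} hSK)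
      (hderiv.mono inter_subset_left) ⟨hqS, le_refl q.2⟩ hmax)

theorem IsNullSolution.eq_right_or_normalDeriv_eq_zero_of_max (hab : a1 < b1) (hD : IsOpen D)
    (ha : IsParabolicOn (Fin.last n) T a β γ) (hu : IsNullSolution a β γ D a1 b1 T u)
    (hw : AdmissibleWeights (a (Fin.last n) (Fin.last n)) (β (Fin.last n)) γ a1 b1 T δ φ ψ)
    (hδ : 0 < δ) (hq : q ∈ parabolicCylinder (closure D) (Icc a1 b1) (Icc 0 T)) (hqT : q.2 < T)
    (hmax : IsMaxOn (weightedSq (Fin.last n) φ ψ (normalDeriv D a1 b1 T u))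
      (parabolicCylinder (closure D) (Icc a1 b1) (Icc 0 T) ∩ {p | p.2 ≤ q.2}) q) :
    q.1 (Fin.last n) = b1 ∨ normalDeriv D a1 b1 T u q = 0 := by
  obtain ⟨hX, ⟨hleft, hright⟩, ht⟩ := id hq
  by_cases hXD : Fin.init q.1 ∈ D
  swap
  · exact .inr (hu.normalDeriv_eq_zero_of_mem_frontier hab
      ⟨hD.frontier_eq ▸ ⟨hX, hXD⟩, ⟨hleft, hright⟩, ht⟩)
  rcases ht.1.eq_or_lt with ht0 | ht0
  · exact .inr (hu.normalDeriv_eq_zero_of_time_eq_zero hab hq ht0.symm)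
  rcases hright.eq_or_lt with hright | hright
  · exact .inl hright
  rcases hleft.eq_or_lt with hleft | hleft
  · exact .inr (hu.normalDeriv_eq_zero_of_left_max hab hD ha hw ⟨hXD, hleft.symm, ht0, hqT⟩ hmax)
  · exact .inr (hu.normalDeriv_eq_zero_of_interior_max hD ha hw hδ
      ⟨hXD, ⟨hleft, hright⟩, ht0, hqT⟩ hmax)

theorem AdmissibleWeights.continuousOn_weightedSq {A B C : ℝ → ℝ} {ι : Type*} {k : ι}
    {N : SpaceTime ι → ℝ} {S : Set (SpaceTime ι)} (hw : AdmissibleWeights A B C a1 b1 T δ φ ψ)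
    (hN : ContinuousOn N S) : ContinuousOn (weightedSq k φ ψ N) S := by
  have hφ := hw.contDiff_space.continuous
  have hψ := hw.continuous_time
  unfold weightedSq
  fun_prop

theorem AdmissibleWeights.mul_exp {A B C : ℝ → ℝ} (hw : AdmissibleWeights A B C a1 b1 T δ φ ψ)
    (η : ℝ) :
    AdmissibleWeights A B C a1 b1 T (δ + η) φ (fun t => ψ t * Real.exp (-η * t)) where
  contDiff_space := hw.contDiff_space
  space_pos := hw.space_pos
  continuous_time := hw.continuous_time.mul (by fun_prop)
  differentiableAt_time t ht := (hw.differentiableAt_time t ht).mul (by fun_prop)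
  time_pos t ht := mul_pos (hw.time_pos t ht) (Real.exp_pos _)
  sign := hw.sign
  decay t ht x hx := by
    have hexp : HasDerivAt (fun s => Real.exp (-η * s)) (Real.exp (-η * t) * -η) t := by
      simpa using ((hasDerivAt_id' t).const_mul (-η)).exp
    have hlog_exp : logDeriv (fun s => Real.exp (-η * s)) t = -η := by
      rw [logDeriv_apply, hexp.deriv, mul_div_cancel_left₀ _ (Real.exp_ne_zero _)]
    rw [logDeriv_mul (g := fun s => Real.exp (-η * s)) t
      (hw.time_pos t (Ioo_subset_Icc_self ht)).ne' (Real.exp_ne_zero _)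
      (hw.differentiableAt_time t ht) hexp.differentiableAt, hlog_exp]
    linarith [hw.decay t ht x hx]

theorem IsNullSolution.weightedSq_le_of_margin_pos (hab : a1 < b1) (hD : IsOpen D)
    (hD_bdd : Bornology.IsBounded D) (ha : IsParabolicOn (Fin.last n) T a β γ)
    (hu : IsNullSolution a β γ D a1 b1 T u)
    (hw : AdmissibleWeights (a (Fin.last n) (Fin.last n)) (β (Fin.last n)) γ a1 b1 T δ φ ψ)
    (hδ : 0 < δ) (hM : 0 ≤ M)
    (hright : ∀ p ∈ parabolicCylinder (closure D) {b1} (Icc 0 T),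
      weightedSq (Fin.last n) φ ψ (normalDeriv D a1 b1 T u) p ≤ M)
    (hq : q ∈ parabolicCylinder (closure D) (Icc a1 b1) (Ico 0 T)) :
    weightedSq (Fin.last n) φ ψ (normalDeriv D a1 b1 T u) q ≤ M := by
  set K := parabolicCylinder (closure D) (Icc a1 b1) (Icc 0 q.2)
  have hK : K ⊆ parabolicCylinder (closure D) (Icc a1 b1) (Icc 0 T) :=
    parabolicCylinder_mono subset_rfl subset_rfl (Icc_subset_Icc_right hq.2.2.2.le)
  obtain ⟨q₀, hq₀, hmax⟩ := (isCompact_parabolicCylinder hD_bdd.isCompact_closure isCompact_Icc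
    isCompact_Icc : IsCompact K).exists_isMaxOn ⟨q, hq.1, hq.2.1, hq.2.2.1, le_refl q.2⟩
    (hw.continuousOn_weightedSq (k := Fin.last n) ((hu.continuousOn_normalDeriv hab).mono hK))
  refine (hmax (⟨hq.1, hq.2.1, hq.2.2.1, le_refl q.2⟩ : q ∈ K)).trans ?_
  have hpast : IsMaxOn (weightedSq (Fin.last n) φ ψ (normalDeriv D a1 b1 T u))
      (parabolicCylinder (closure D) (Icc a1 b1) (Icc 0 T) ∩ {p | p.2 ≤ q₀.2}) q₀ :=
    hmax.on_subset fun p ⟨⟨hX, hx, ht⟩, hpq⟩ => ⟨hX, hx, ht.1, le_trans hpq hq₀.2.2.2⟩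
  rcases hu.eq_right_or_normalDeriv_eq_zero_of_max hab hD ha hw hδ (hK hq₀)
    (hq₀.2.2.2.trans_lt hq.2.2.2) hpast with hb | hzero
  · exact hright q₀ ⟨hq₀.1, hb, (hK hq₀).2.2⟩
  · simpa [weightedSq, hzero] using hM

theorem IsNullSolution.weightedSq_damped_le (hab : a1 < b1) (hD : IsOpen D)
    (hD_bdd : Bornology.IsBounded D) (ha : IsParabolicOn (Fin.last n) T a β γ)
    (hu : IsNullSolution a β γ D a1 b1 T u)
    (hw : AdmissibleWeights (a (Fin.last n) (Fin.last n)) (β (Fin.last n)) γ a1 b1 T 0 φ ψ)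
    (hδ : 0 < δ) (hM : 0 ≤ M)
    (hright : ∀ p ∈ parabolicCylinder (closure D) {b1} (Icc 0 T),
      weightedSq (Fin.last n) φ ψ (normalDeriv D a1 b1 T u) p ≤ M)
    (hq : q ∈ parabolicCylinder (closure D) (Icc a1 b1) (Ico 0 T)) :
    weightedSq (Fin.last n) φ (fun t => ψ t * Real.exp (-δ * t)) (normalDeriv D a1 b1 T u) q
      ≤ M := by
  refine hu.weightedSq_le_of_margin_pos hab hD hD_bdd ha (hw.mul_exp δ) (by simpa using hδ) hM
    (fun p hp => le_trans ?_ (hright p hp)) hq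
  have hφ_nonneg := (hw.space_pos _ (right_face_subset_parabolicCylinder hab.le hp).2.1).le
  have hexp_le_one : Real.exp (-δ * p.2) ≤ 1 :=
    Real.exp_le_one_iff.2 (mul_nonpos_of_nonpos_of_nonneg (neg_nonpos.2 hδ.le) hp.2.2.1)
  exact mul_le_mul_of_nonneg_left (mul_le_of_le_one_right (hw.time_pos _ hp.2.2).le hexp_le_one)
    (by positivity)

theorem IsNullSolution.weightedSq_le (hT : 0 < T) (hab : a1 < b1) (hD : IsOpen D)
    (hD_bdd : Bornology.IsBounded D) (ha : IsParabolicOn (Fin.last n) T a β γ)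
    (hu : IsNullSolution a β γ D a1 b1 T u)
    (hw : AdmissibleWeights (a (Fin.last n) (Fin.last n)) (β (Fin.last n)) γ a1 b1 T 0 φ ψ)
    (hM : 0 ≤ M)
    (hright : ∀ p ∈ parabolicCylinder (closure D) {b1} (Icc 0 T),
      weightedSq (Fin.last n) φ ψ (normalDeriv D a1 b1 T u) p ≤ M)
    (hq : q ∈ parabolicCylinder (closure D) (Icc a1 b1) (Icc 0 T)) :
    weightedSq (Fin.last n) φ ψ (normalDeriv D a1 b1 T u) q ≤ M := by
  have hopen : ∀ p ∈ parabolicCylinder (closure D) (Icc a1 b1) (Ico 0 T),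
      weightedSq (Fin.last n) φ ψ (normalDeriv D a1 b1 T u) p ≤ M := by
    intro p hp
    have hcont : Continuous fun δ : ℝ => weightedSq (Fin.last n) φ
        (fun t => ψ t * Real.exp (-δ * t)) (normalDeriv D a1 b1 T u) p := by
      unfold weightedSq
      fun_prop
    have hlim := (hcont.tendsto 0).mono_left (nhdsWithin_le_nhds (s := Ioi 0))
    simp only [neg_zero, zero_mul, Real.exp_zero, mul_one] at hlim
    exact le_of_tendsto hlim (eventually_nhdsWithin_of_forall fun δ hδ =>
      hu.weightedSq_damped_le hab hD hD_bdd ha hw hδ hM hright hp)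
  have hclosure : closure (parabolicCylinder (closure D) (Icc a1 b1) (Ico 0 T)) =
      parabolicCylinder (closure D) (Icc a1 b1) (Icc 0 T) := by
    rw [closure_parabolicCylinder, closure_closure, closure_Icc, closure_Ico hT.ne]
  exact le_on_closure hopen
    (hclosure ▸ hw.continuousOn_weightedSq (hu.continuousOn_normalDeriv hab))
    continuousOn_const (hclosure ▸ hq)

theorem IsNullSolution.weightedSq_le_sSup_right_face (hT : 0 < T) (hab : a1 < b1) (hD : IsOpen D)
    (hD_bdd : Bornology.IsBounded D) (ha : IsParabolicOn (Fin.last n) T a β γ)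
    (hu : IsNullSolution a β γ D a1 b1 T u)
    (hw : AdmissibleWeights (a (Fin.last n) (Fin.last n)) (β (Fin.last n)) γ a1 b1 T 0 φ ψ)
    (hq : q ∈ parabolicCylinder (closure D) (Icc a1 b1) (Icc 0 T)) :
    weightedSq (Fin.last n) φ ψ (normalDeriv D a1 b1 T u) q ≤
      sSup (weightedSq (Fin.last n) φ ψ (normalDeriv D a1 b1 T u) ''
        parabolicCylinder (closure D) {b1} (Icc 0 T)) := by
  have hface : parabolicCylinder (closure D) {b1} (Icc 0 T) ⊆
      parabolicCylinder (closure D) (Icc a1 b1) (Icc 0 T) :=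
    right_face_subset_parabolicCylinder hab.le
  have hbdd := ((isCompact_parabolicCylinder hD_bdd.isCompact_closure isCompact_singleton
    isCompact_Icc).image_of_continuousOn (hw.continuousOn_weightedSq (k := Fin.last n)
      ((hu.continuousOn_normalDeriv hab).mono hface))).bddAbove
  refine hu.weightedSq_le hT hab hD hD_bdd ha hw (Real.sSup_nonneg ?_)
    (fun p hp => le_csSup hbdd (mem_image_of_mem _ hp)) hq
  rintro _ ⟨p, hp, rfl⟩
  exact mul_nonneg (mul_nonneg (sq_nonneg _) (hw.space_pos _ (hface hp).2.1).le)
    (hw.time_pos _ hp.2.2).le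

end MaximumPrinciple

section Coefficients

theorem IsParabolicOn.of_uniformly_elliptic {ι : Type*} [Fintype ι] {k : ι} {T ν₀ : ℝ}
    (hν₀ : 0 < ν₀) {a : ι → ι → ℝ → ℝ} {β : ι → ℝ → ℝ} {γ : ℝ → ℝ}
    (ha : ∀ i j, Continuous (a i j)) (hβ : ∀ i, Continuous (β i)) (hγ : Continuous γ)
    (hell : ∀ t ∈ Ioo 0 T, ∀ ξ : ι → ℝ,
      ν₀ * ∑ i, ξ i ^ 2 ≤ ∑ i, ∑ j, a i j t * ξ i * ξ j) :
    IsParabolicOn k T a β γ where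
  continuous_diffusion := ha
  continuous_drift := hβ
  continuous_potential := hγ
  diffusion_nonneg t ht ξ := le_trans (by positivity) (hell t ht ξ)
  diffusion_pos t ht := by
    classical
    have hdiag : ν₀ ≤ a k k t := by
      simpa [Pi.single_apply] using hell t ht (Pi.single k 1)
    exact hν₀.trans_le hdiag

variable {α : Type*} {f g : α → ℝ}

theorem exists_abs_add_le (hf : ∃ C, ∀ t, |f t| ≤ C) (hg : ∃ C, ∀ t, |g t| ≤ C) :
    ∃ C, ∀ t, |f t + g t| ≤ C :=
  let ⟨F, hF⟩ := hf
  let ⟨G, hG⟩ := hg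
  ⟨F + G, fun t => (abs_add_le _ _).trans (add_le_add (hF t) (hG t))⟩

theorem exists_abs_const_mul_le (r : ℝ) (hf : ∃ C, ∀ t, |f t| ≤ C) :
    ∃ C, ∀ t, |r * f t| ≤ C :=
  let ⟨F, hF⟩ := hf
  ⟨|r| * F, fun t => (abs_mul _ _).trans_le (mul_le_mul_of_nonneg_left (hF t) (abs_nonneg r))⟩

theorem exists_abs_sub_le (hf : ∃ C, ∀ t, |f t| ≤ C) (hg : ∃ C, ∀ t, |g t| ≤ C) :
    ∃ C, ∀ t, |f t - g t| ≤ C := by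
  simpa only [neg_one_mul, ← sub_eq_add_neg] using
    exists_abs_add_le hf (exists_abs_const_mul_le (-1) hg)

theorem abs_le_ciSup_abs (hf : ∃ C, ∀ t, |f t| ≤ C) (t : α) : |f t| ≤ ⨆ s, |f s| :=
  le_ciSup (f := fun s => |f s|) (hf.imp fun _ hC => forall_mem_range.2 hC) t

theorem neg_decayRate_le_criticalRate {A B C As Bs Cs R1 R2 x : ℝ} {φ : ℝ → ℝ} (hA : |A| ≤ As)
    (hB : |B| ≤ Bs) (hC : |C| ≤ Cs) (hφ1 : |deriv φ x / φ x| ≤ R1)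
    (hφ2 : |deriv (deriv φ) x / φ x| ≤ R2) :
    -(As * R2 + 2 * As * R1 ^ 2 + 2 * Cs + Bs * R1) ≤ criticalRate A B C φ x := by
  have hAs : 0 ≤ As := (abs_nonneg A).trans hA
  have hBs : 0 ≤ Bs := (abs_nonneg B).trans hB
  have hsecond : |A * (deriv (deriv φ) x / φ x)| ≤ As * R2 :=
    (abs_mul _ _).trans_le (mul_le_mul hA hφ2 (abs_nonneg _) hAs)
  have hfirst : |B * (deriv φ x / φ x)| ≤ Bs * R1 :=
    (abs_mul _ _).trans_le (mul_le_mul hB hφ1 (abs_nonneg _) hBs)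
  have hsquare : |A * (deriv φ x / φ x) ^ 2| ≤ As * R1 ^ 2 := by
    rw [abs_mul, abs_pow]
    exact mul_le_mul hA (pow_le_pow_left₀ (abs_nonneg _) hφ1 2) (by positivity) hAs
  have hsquare_nonneg : 0 ≤ As * R1 ^ 2 := by positivity
  rw [criticalRate, logDeriv_apply]
  linarith [(abs_le.1 hsecond).1, (abs_le.1 hfirst).2, (abs_le.1 hsquare).2, (abs_le.1 hC).1]

theorem AdmissibleWeights.of_decayRate {A B C φ ψ : ℝ → ℝ} {a1 b1 T : ℝ}
    (hA : ∃ R, ∀ t, |A t| ≤ R) (hB : ∃ R, ∀ t, |B t| ≤ R) (hC : ∃ R, ∀ t, |C t| ≤ R)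
    (hφ : ContDiff ℝ 2 φ) (hφ_pos : ∀ x ∈ Icc a1 b1, 0 < φ x)
    (hφ1 : ∃ R, ∀ x, |deriv φ x / φ x| ≤ R) (hφ2 : ∃ R, ∀ x, |deriv (deriv φ) x / φ x| ≤ R)
    (hsign : ∀ t ∈ Ioo 0 T, 0 < 2 * B t / A t + logDeriv φ a1)
    (hψ : Differentiable ℝ ψ) (hψ_pos : ∀ t ∈ Icc 0 T, 0 < ψ t)
    (hdecay : ∀ t ∈ Ioo 0 T, logDeriv ψ t ≤
      -((⨆ t, |A t|) * (⨆ x, |deriv (deriv φ) x / φ x|)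
        + 2 * (⨆ t, |A t|) * (⨆ x, |deriv φ x / φ x|) ^ 2
        + 2 * (⨆ t, |C t|) + (⨆ t, |B t|) * (⨆ x, |deriv φ x / φ x|))) :
    AdmissibleWeights A B C a1 b1 T 0 φ ψ where
  contDiff_space := hφ
  space_pos := hφ_pos
  continuous_time := hψ.continuous
  differentiableAt_time t _ := hψ t
  time_pos := hψ_pos
  sign := hsign
  decay t ht x _ := by
    rw [add_zero]
    exact (hdecay t ht).trans (neg_decayRate_le_criticalRate (abs_le_ciSup_abs hA t)
      (abs_le_ciSup_abs hB t) (abs_le_ciSup_abs hC t) (abs_le_ciSup_abs hφ1 x)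
      (abs_le_ciSup_abs hφ2 x))

theorem two_mul_transformed_drift_div {A B p : ℝ} (hA : A ≠ 0) :
    2 * (2 * p * A + B) / A = 4 * p + 2 * B / A := by
  field_simp
  ring

end Coefficients

section Estimate

variable {n : ℕ} {D : Set (Fin n → ℝ)} {a1 b1 T : ℝ}

theorem closure_prod_eq_parabolicCylinder (hab : a1 < b1) (hT : 0 < T) :
    closure {x : Fin (n + 1) → ℝ | Fin.init x ∈ D ∧ x (Fin.last n) ∈ Ioo a1 b1} ×ˢ Icc 0 T =
      parabolicCylinder (closure D) (Icc a1 b1) (Icc 0 T) := by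
  rw [← closure_Ioo hT.ne, ← closure_prod_eq, ← closure_Ioo hab.ne, ← closure_parabolicCylinder]
  congr 1
  ext q
  exact and_assoc

theorem isNullSolution_of_parabolicOp_eq_zero (hD : IsOpen D)
    {a : Fin (n + 1) → Fin (n + 1) → ℝ → ℝ} {β : Fin (n + 1) → ℝ → ℝ} {γ : ℝ → ℝ}
    {ε : (Fin (n + 1) → ℝ) → ℝ → ℝ}
    (hε : ContDiffOn ℝ 3 (fun q : SpaceTime (Fin (n + 1)) => ε q.1 q.2)
      (parabolicCylinder (closure D) (Icc a1 b1) (Icc 0 T)))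
    (hpde : ∀ q ∈ parabolicCylinder D (Ioo a1 b1) (Ioo 0 T), parabolicOp a β γ ε q.1 q.2 = 0)
    (hlat : ∀ X ∈ frontier D, ∀ xn ∈ Icc a1 b1, ∀ t ∈ Icc 0 T, ε (Fin.snoc X xn) t = 0)
    (hic : ∀ x : Fin (n + 1) → ℝ, Fin.init x ∈ D → x (Fin.last n) ∈ Ioo a1 b1 → ε x 0 = 0)
    (hleft : ∀ X ∈ D, ∀ t ∈ Ioo 0 T, ε (Fin.snoc X a1) t = 0) :
    IsNullSolution a β γ D a1 b1 T fun q => ε q.1 q.2 where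
  contDiffOn := hε
  equation q hq := by
    have hnhds : parabolicCylinder (closure D) (Icc a1 b1) (Icc 0 T) ∈ 𝓝 q :=
      mem_of_superset ((isOpen_parabolicCylinder hD isOpen_Ioo isOpen_Ioo).mem_nhds hq)
        (parabolicCylinder_mono subset_closure Ioo_subset_Icc_self Ioo_subset_Icc_self)
    exact (parabolicOp_eq_spacetimeOp a β γ
      ((hε.contDiffAt hnhds).of_le (by norm_num))).symm.trans (hpde q hq)
  left q hq := by simpa [← mem_singleton_iff.1 hq.2.1] using hleft _ hq.1 _ hq.2.2
  lateral q hq := by simpa using hlat _ hq.1 _ hq.2.1 _ hq.2.2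
  initial q hq := by simpa [mem_singleton_iff.1 hq.2.2] using hic q.1 hq.1 hq.2.1

theorem fderivWithin_slice_eq_normalDeriv (hab : a1 < b1) (hT : 0 < T)
    {u : SpaceTime (Fin (n + 1)) → ℝ}
    (hu : DifferentiableOn ℝ u (parabolicCylinder (closure D) (Icc a1 b1) (Icc 0 T)))
    {x : Fin (n + 1) → ℝ} {t : ℝ}
    (hxt : (x, t) ∈ parabolicCylinder (closure D) (Icc a1 b1) (Icc 0 T)) :
    fderivWithin ℝ (fun y => u (y, t))
      (closure {x : Fin (n + 1) → ℝ | Fin.init x ∈ D ∧ x (Fin.last n) ∈ Ioo a1 b1}) x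
      (Pi.single (Fin.last n) 1) = normalDeriv D a1 b1 T u (x, t) := by
  have hdir := spaceDir_last_mem_tangentConeAt_parabolicCylinder (uniqueDiffOn_Icc hab) hxt
  have hdiff := hu (x, t) hxt
  rw [normalDeriv]
  rw [← closure_prod_eq_parabolicCylinder hab hT] at hdir hdiff ⊢
  exact fderivWithin_slice_eq_pdWithin hdiff hxt.2.2 hdir

theorem weightedSq_image_right_face {J : Set ℝ} {φ ψ : ℝ → ℝ}
    {N : SpaceTime (Fin (n + 1)) → ℝ} {ν : (Fin (n + 1) → ℝ) → ℝ → ℝ}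
    (hν : ∀ X ∈ D, ∀ s ∈ J, ν (Fin.snoc X b1) s = N (Fin.snoc X b1, s)) :
    weightedSq (Fin.last n) φ ψ N '' parabolicCylinder D {b1} J =
      {y : ℝ | ∃ X ∈ D, ∃ s ∈ J, y = ν (Fin.snoc X b1) s ^ 2 * φ b1 * ψ s} := by
  ext y
  constructor
  · rintro ⟨q, hq, rfl⟩
    refine ⟨Fin.init q.1, hq.1, q.2, hq.2.2, ?_⟩
    rw [hν _ hq.1 _ hq.2.2, weightedSq, ← mem_singleton_iff.1 hq.2.1, Fin.snoc_init_self]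
  · rintro ⟨X, hX, s, hs, rfl⟩
    refine ⟨(Fin.snoc X b1, s), snoc_mem_parabolicCylinder.2 ⟨hX, rfl, hs⟩, ?_⟩
    simp only [weightedSq, hν X hX s hs, Fin.snoc_last]

theorem estimate_2_left_extreme_subdomain_general (hT : 0 < T) (hab : a1 < b1)
    {a : Fin (n + 1) → Fin (n + 1) → ℝ → ℝ} {β : Fin (n + 1) → ℝ → ℝ} {γ : ℝ → ℝ}
    (ha : IsParabolicOn (Fin.last n) T a β γ) (hD_open : IsOpen D)
    (hD_bdd : Bornology.IsBounded D) {Ω1 : Set (Fin (n + 1) → ℝ)}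
    (hΩ1 : Ω1 = {x : Fin (n + 1) → ℝ | Fin.init x ∈ D ∧ x (Fin.last n) ∈ Ioo a1 b1})
    {ε : (Fin (n + 1) → ℝ) → ℝ → ℝ}
    (hε : ContDiffOn ℝ 3 (fun q : (Fin (n + 1) → ℝ) × ℝ => ε q.1 q.2) (closure Ω1 ×ˢ Icc 0 T))
    (hε_pde : ∀ x ∈ Ω1, ∀ t ∈ Ioo 0 T, parabolicOp a β γ ε x t = 0)
    (hε_lat : ∀ X ∈ frontier D, ∀ xn ∈ Icc a1 b1, ∀ t ∈ Icc 0 T, ε (Fin.snoc X xn) t = 0)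
    (hε_ic : ∀ x ∈ Ω1, ε x 0 = 0)
    (hε_left : ∀ X ∈ D, ∀ t ∈ Ioo 0 T, ε (Fin.snoc X a1) t = 0)
    {ν : (Fin (n + 1) → ℝ) → ℝ → ℝ}
    (hν : ∀ x t, ν x t =
      fderivWithin ℝ (fun y => ε y t) (closure Ω1) x (Pi.single (Fin.last n) 1))
    {φ ϕ : ℝ → ℝ}
    (hw : AdmissibleWeights (a (Fin.last n) (Fin.last n)) (β (Fin.last n)) γ a1 b1 T 0 φ ϕ) :
    ∀ X ∈ closure D, ∀ xn ∈ Icc a1 b1, ∀ t ∈ Icc 0 T,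
      ν (Fin.snoc X xn) t ^ 2 * φ xn * ϕ t ≤
        sSup {y : ℝ | ∃ X' ∈ closure D, ∃ s ∈ Icc 0 T,
          y = ν (Fin.snoc X' b1) s ^ 2 * φ b1 * ϕ s} := by
  subst hΩ1
  rw [closure_prod_eq_parabolicCylinder hab hT] at hε
  have hu : IsNullSolution a β γ D a1 b1 T fun q => ε q.1 q.2 :=
    isNullSolution_of_parabolicOp_eq_zero hD_open hε
      (fun q hq => hε_pde q.1 ⟨hq.1, hq.2.1⟩ q.2 hq.2.2) hε_lat
      (fun x hX hx => hε_ic x ⟨hX, hx⟩) hε_left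
  have hν_eq : ∀ X ∈ closure D, ∀ xn ∈ Icc a1 b1, ∀ t ∈ Icc 0 T,
      ν (Fin.snoc X xn) t = normalDeriv D a1 b1 T (fun q => ε q.1 q.2) (Fin.snoc X xn, t) :=
    fun X hX xn hxn t ht => (hν _ _).trans <| fderivWithin_slice_eq_normalDeriv hab hT
      hu.differentiableOn (snoc_mem_parabolicCylinder.2 ⟨hX, hxn, ht⟩)
  intro X hX xn hxn t ht
  have hmax := hu.weightedSq_le_sSup_right_face hT hab hD_open hD_bdd ha hw
    (snoc_mem_parabolicCylinder.2 ⟨hX, hxn, ht⟩)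
  rw [weightedSq_image_right_face fun X' hX' => hν_eq X' hX' b1 (right_mem_Icc.2 hab.le)] at hmax
  simpa only [weightedSq, hν_eq X hX xn hxn t ht, Fin.snoc_last] using hmax

end Estimate

/-- Estimate 2, left extreme subdomain: with the additional Dirichlet
condition `ε(·,a₁,·) = 0` and the sign condition
`4p + 2bₙ/aₙₙ + φ'(a₁)/φ(a₁) > 0`, the weighted squared normal derivative
`ν² φ(xₙ) ϕ(t)`, `ν = ∂ₙε`, attains its maximum on the face `xₙ = b₁` only. -/
theorem estimate_2_left_extreme_subdomain
    {n : ℕ} (T p ν₀ : ℝ) (hT : 0 < T) (hν₀ : 0 < ν₀)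
    (a : Fin (n+1) → Fin (n+1) → ℝ → ℝ) (b : Fin (n+1) → ℝ → ℝ) (c : ℝ → ℝ)
    (ha_symm : ∀ i j t, a i j t = a j i t)
    (ha_smooth : ∀ i j, ContDiff ℝ (⊤ : ℕ∞) (a i j))
    (ha_bdd : ∀ i j, ∃ C, ∀ t, |a i j t| ≤ C)
    (hb_smooth : ∀ i, ContDiff ℝ (⊤ : ℕ∞) (b i))
    (hb_bdd : ∀ i, ∃ C, ∀ t, |b i t| ≤ C)
    (hc_smooth : ContDiff ℝ (⊤ : ℕ∞) c)
    (hc_bdd : ∃ C, ∀ t, |c t| ≤ C)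
    (hell : ∀ t ∈ Ioo (0:ℝ) T, ∀ ξ : Fin (n+1) → ℝ,
      ν₀ * ∑ i, ξ i ^ 2 ≤ ∑ i, ∑ j, a i j t * ξ i * ξ j)
    (D : Set (Fin n → ℝ)) (hD_open : IsOpen D) (hD_bdd : Bornology.IsBounded D)
    (a1 b1 : ℝ) (hab : a1 < b1)
    (Ω1 : Set (Fin (n+1) → ℝ))
    (hΩ1 : Ω1 = {x : Fin (n+1) → ℝ | Fin.init x ∈ D ∧ x (Fin.last n) ∈ Ioo a1 b1})
    (ε : (Fin (n+1) → ℝ) → ℝ → ℝ)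
    (hε_smooth : ContDiffOn ℝ (⊤ : ℕ∞)
      (fun q : (Fin (n+1) → ℝ) × ℝ => ε q.1 q.2) (closure Ω1 ×ˢ Icc 0 T))
    (hε_pde : ∀ x ∈ Ω1, ∀ t ∈ Ioo (0:ℝ) T, transOp p a b c ε x t = 0)
    (hε_lat : ∀ X ∈ frontier D, ∀ xn ∈ Icc a1 b1, ∀ t ∈ Icc (0:ℝ) T,
      ε (Fin.snoc X xn) t = 0)
    (hε_ic : ∀ x ∈ Ω1, ε x 0 = 0)
    (hε_left : ∀ X ∈ D, ∀ t ∈ Ioo (0:ℝ) T, ε (Fin.snoc X a1) t = 0)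
    (ν : (Fin (n+1) → ℝ) → ℝ → ℝ)
    (hν : ∀ x t, ν x t =
      fderivWithin ℝ (fun y => ε y t) (closure Ω1) x (Pi.single (Fin.last n) 1))
    (φ : ℝ → ℝ) (hφ : ContDiff ℝ 2 φ) (hφ_pos : ∀ x, 0 < φ x)
    (hφ1 : ∃ C, ∀ x, |deriv φ x / φ x| ≤ C)
    (hφ2 : ∃ C, ∀ x, |deriv (deriv φ) x / φ x| ≤ C)
    (hφ_sign : ∀ t ∈ Icc (0:ℝ) T,
      0 < 4 * p + 2 * b (Fin.last n) t / a (Fin.last n) (Fin.last n) t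
            + deriv φ a1 / φ a1)
    (Γ : ℝ)
    (hΓ : Γ = (⨆ t, |a (Fin.last n) (Fin.last n) t|) *
            (⨆ x, |deriv (deriv φ) x / φ x|)
          + 2 * (⨆ t, |a (Fin.last n) (Fin.last n) t|) * (⨆ x, |deriv φ x / φ x|) ^ 2
          + 2 * (⨆ t, |c t - p * b (Fin.last n) t
                        - p ^ 2 * a (Fin.last n) (Fin.last n) t|)
          + (⨆ t, |2 * p * a (Fin.last n) (Fin.last n) t + b (Fin.last n) t|) *
            (⨆ x, |deriv φ x / φ x|))
    (ϕ : ℝ → ℝ) (hϕ : ContDiff ℝ 1 ϕ)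
    (hϕ_pos : ∀ t ∈ Icc (0:ℝ) T, 0 < ϕ t)
    (hϕ_decay : ∀ t ∈ Icc (0:ℝ) T, deriv ϕ t / ϕ t ≤ -Γ) :
    ∀ X ∈ closure D, ∀ xn ∈ Icc a1 b1, ∀ t ∈ Icc (0:ℝ) T,
      ν (Fin.snoc X xn) t ^ 2 * φ xn * ϕ t ≤
        sSup {y : ℝ | ∃ X' ∈ closure D, ∃ s ∈ Icc (0:ℝ) T,
          y = ν (Fin.snoc X' b1) s ^ 2 * φ b1 * ϕ s} := by
  have hac i j := (ha_smooth i j).continuous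
  have hbc i := (hb_smooth i).continuous
  have hparabolic : IsParabolicOn (Fin.last n) T a (fun i t => 2 * p * a i (Fin.last n) t + b i t)
      (fun t => c t - p * b (Fin.last n) t - p ^ 2 * a (Fin.last n) (Fin.last n) t) :=
    .of_uniformly_elliptic hν₀ hac (fun i => by fun_prop)
      (by have := hc_smooth.continuous; fun_prop) hell
  have ha_nn := ha_bdd (Fin.last n) (Fin.last n)
  have hb_n := hb_bdd (Fin.last n)
  refine estimate_2_left_extreme_subdomain_general hT hab hparabolic hD_open hD_bdd hΩ1
    (hε_smooth.of_le (WithTop.coe_le_coe.2 le_top))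
    (by simpa only [transOp_eq_parabolicOp] using hε_pde) hε_lat hε_ic hε_left hν
    (.of_decayRate ha_nn (exists_abs_add_le (exists_abs_const_mul_le (2 * p) ha_nn) hb_n)
      (exists_abs_sub_le (exists_abs_sub_le hc_bdd (exists_abs_const_mul_le p hb_n))
        (exists_abs_const_mul_le (p ^ 2) ha_nn)) hφ (fun x _ => hφ_pos x) hφ1 hφ2
      (fun t ht => ?_) (hϕ.differentiable one_ne_zero) hϕ_pos
      fun t ht => hΓ ▸ hϕ_decay t (Ioo_subset_Icc_self ht))
  rw [two_mul_transformed_drift_div (hparabolic.diffusion_pos t ht).ne']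
  exact hφ_sign t (Ioo_subset_Icc_self ht)
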